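/- Let k > 470, n ≥ k+1, and suppose L_n^{(k)} = a·(10^{d1}−1)/9 + (b−a)·10^{d2} with integers 0 ≤ d2 < d1, d1 ≥ 3, 1 ≤ a ≤ 9 and 0 ≤ b ≤ 9. Then k < 3·10^{31} and n < 1.8·10^{291}. -/

import Mathlib

/-- Shifted `k`-generalized Lucas sequence: `genLucas k m` equals `L^{(k)}_{m - (k-2)}`,
so that index `m = 0` corresponds to `n = 2 - k`.  The initial values are
`L^{(k)}_{2-k} = ⋯ = L^{(k)}_{-1} = 0`, `L^{(k)}_0 = 2`, `L^{(k)}_1 = 1`, and each term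
afterwards is the sum of the `k` preceding terms. -/
def genLucas (k : ℕ) : ℕ → ℤ := fun m =>
  if h1 : m < k - 2 then 0
  else if h2 : m = k - 2 then 2
  else if h3 : m = k - 1 then 1
  else ∑ i ∈ Finset.range k, genLucas k (m - 1 - i)
decreasing_by omega

/-- The `k`-generalized Lucas number `L^{(k)}_n` for `n ≥ 0`. -/
def lucasL (k n : ℕ) : ℤ := genLucas k (n + k - 2)

theorem aux_min_sum (T : ℕ) (s : Finset ℕ) (hs : s.card = T) :
    ∑ i ∈ Finset.range T, i ≤ ∑ x ∈ s, min x T := by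
  classical
  have h1 := Finset.sum_sdiff_eq_sub (s₁ := s ∩ Finset.range T) (s₂ := s) (f := fun x => ((min x T : ℕ) : ℤ)) Finset.inter_subset_left
  have h2 := Finset.sum_sdiff_eq_sub (s₁ := s ∩ Finset.range T) (s₂ := Finset.range T) (f := fun x => (x : ℤ)) Finset.inter_subset_right
  have h3 : ∑ x ∈ s ∩ Finset.range T, ((min x T : ℕ) : ℤ) = ∑ x ∈ s ∩ Finset.range T, (x : ℤ) := by
    apply Finset.sum_congr rfl
    intro x hx
    have := (Finset.mem_inter.1 hx).2
    rw [Finset.mem_range] at this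
    rw [min_eq_left this.le]
  have h4 : ∑ x ∈ s \ (s ∩ Finset.range T), ((min x T : ℕ) : ℤ) = (s \ (s ∩ Finset.range T)).card * (T : ℤ) := by
    rw [Finset.sum_congr rfl (g := fun _ => (T : ℤ))]
    · simp
    · intro x hx
      simp at hx
      rw [min_eq_right hx.2]
  have h5 : ∑ x ∈ Finset.range T \ (s ∩ Finset.range T), (x : ℤ) ≤ (Finset.range T \ (s ∩ Finset.range T)).card * (T : ℤ) := by
    rw [← nsmul_eq_mul]
    apply Finset.sum_le_card_nsmul
    intro x hx
    simp at hx
    exact_mod_cast hx.1.le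
  have h6 : (s \ (s ∩ Finset.range T)).card = (Finset.range T \ (s ∩ Finset.range T)).card := by
    rw [Finset.card_sdiff_of_subset Finset.inter_subset_left, Finset.card_sdiff_of_subset Finset.inter_subset_right, hs, Finset.card_range]
  rw [h6] at h4
  have : (∑ i ∈ Finset.range T, (i : ℤ)) ≤ ∑ x ∈ s, ((min x T : ℕ) : ℤ) := by linarith
  zify
  push_cast at this
  exact this

theorem aux_phi_sum (T : ℕ) (φ : Fin T → Fin (T+1))
    (h : ∀ i j, φ i = φ j → (φ i : ℕ) < T → i = j) :
    T * (T - 1) / 2 ≤ ∑ j, (φ j : ℕ) := by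
  classical
  let ψ : Fin T → ℕ := fun j => if (φ j : ℕ) < T then φ j else T + j
  have hψ : Function.Injective ψ := by
    intro i j hij
    simp only [ψ] at hij
    split_ifs at hij with h1 h2 h2
    · exact h i j (Fin.ext hij) h1
    · omega
    · omega
    · apply Fin.ext; omega
  have h1 := aux_min_sum T (Finset.univ.image ψ) (by rw [Finset.card_image_of_injective _ hψ]; simp)
  rw [Finset.sum_image (fun a _ b _ hab => hψ hab), Finset.sum_range_id] at h1
  refine h1.trans (le_of_eq (Finset.sum_congr rfl ?_))
  intro j _
  simp only [ψ]
  have := (φ j).2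
  split_ifs with h2 <;> omega

theorem det_upper (T : ℕ) (F ρ : ℝ) (hF : 0 ≤ F) (hρ : 1 ≤ ρ) (A : Matrix (Fin T) (Fin T) ℝ)
    (u : Fin T → ℝ) (hu : ∀ r, |u r| ≤ 1) (c : Fin T → ℕ → ℝ)
    (hc : ∀ j n, n < T → |c j n| ≤ F * (ρ ^ n)⁻¹)
    (hA : ∀ r j, |A r j - ∑ n ∈ Finset.range T, c j n * u r ^ n| ≤ F * (ρ ^ T)⁻¹) :
    |A.det| ≤ (T + 1 : ℝ) ^ T * (T.factorial * F ^ T * (ρ ^ (T * (T - 1) / 2))⁻¹) := by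
  classical
  have hρ0 : 0 < ρ := by linarith
  let vec : Fin T → Fin (T+1) → Fin T → ℝ := fun j m r =>
    if (m : ℕ) < T then c j m * u r ^ (m : ℕ) else A r j - ∑ n ∈ Finset.range T, c j n * u r ^ n
  have hsum : A.transpose = Matrix.of fun j => ∑ m, vec j m := by
    ext j r
    rw [Matrix.of_apply, Finset.sum_apply, Fin.sum_univ_castSucc]
    simp only [vec, Fin.val_castSucc, Fin.is_lt, if_true, Fin.val_last, lt_irrefl, if_false]
    rw [Finset.sum_range (fun n => c j n * u r ^ n)]
    simp
  have hdet : A.det = ∑ φ : Fin T → Fin (T+1), Matrix.det (Matrix.of fun j => vec j (φ j)) := by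
    rw [← Matrix.det_transpose, hsum]
    exact (Matrix.detRowAlternating (n := Fin T) (R := ℝ)).toMultilinearMap.map_sum vec
  rw [hdet]
  have key : ∀ φ : Fin T → Fin (T+1), |Matrix.det (Matrix.of fun j => vec j (φ j))| ≤
      (T.factorial * F ^ T * (ρ ^ (T * (T - 1) / 2))⁻¹) := by
    intro φ
    by_cases hφ : ∀ i j, φ i = φ j → (φ i : ℕ) < T → i = j
    · have h1 := aux_phi_sum T φ hφ
      have h2 : (Matrix.of fun j => vec j (φ j) : Matrix (Fin T) (Fin T) ℝ) =
          Matrix.of fun j r => (ρ ^ (φ j : ℕ))⁻¹ * (Matrix.of (fun j r => ρ ^ (φ j : ℕ) * vec j (φ j) r) j r) := by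
        ext j r
        simp only [Matrix.of_apply]
        rw [inv_mul_cancel_left₀ (by positivity)]
      rw [h2, Matrix.det_mul_column, abs_mul]
      have h3 := Matrix.det_le (A := Matrix.of (fun j r => ρ ^ (φ j : ℕ) * vec j (φ j) r)) (abv := (AbsoluteValue.abs : AbsoluteValue ℝ ℝ)) (x := F) (by
        intro j r
        simp only [Matrix.of_apply, AbsoluteValue.abs_apply, abs_mul]
        rw [abs_of_pos (by positivity : 0 < ρ ^ (φ j : ℕ))]
        have : |vec j (φ j) r| ≤ F * (ρ ^ (φ j : ℕ))⁻¹ := by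
          simp only [vec]
          split_ifs with h
          · rw [abs_mul, abs_pow]
            refine le_trans ?_ (hc j _ h)
            exact mul_le_of_le_one_right (abs_nonneg _) (pow_le_one₀ (abs_nonneg _) (hu r))
          · have : (φ j : ℕ) = T := by have := (φ j).2; omega
            rw [this]; exact hA r j
        calc _ ≤ ρ ^ (φ j : ℕ) * (F * (ρ ^ (φ j : ℕ))⁻¹) := by gcongr
          _ = F := by field_simp)
      simp only [AbsoluteValue.abs_apply, Fintype.card_fin, nsmul_eq_mul] at h3
      rw [Finset.prod_inv_distrib, Finset.prod_pow_eq_pow_sum, abs_of_pos (by positivity), mul_comm]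
      apply mul_le_mul h3 _ (by positivity) (by positivity)
      gcongr
    · push Not at hφ
      obtain ⟨i, j, hij, hlt, hne⟩ := hφ
      have : Matrix.det (Matrix.of fun j => vec j (φ j)) = 0 := by
        rw [← Matrix.det_transpose]
        by_cases h0 : c i (φ i) = 0
        · apply Matrix.det_eq_zero_of_column_eq_zero i
          intro r
          simp [Matrix.transpose, vec, hlt, h0]
        · rw [Matrix.det_transpose]
          rw [← Matrix.exists_vecMul_eq_zero_iff]
          refine ⟨Pi.single j (c i (φ i)) - Pi.single i (c j (φ j)), ?_, ?_⟩
          · intro h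
            have := congrFun h j
            simp [hne.symm] at this
            exact h0 this
          · ext r
            simp [Matrix.sub_vecMul]
            simp [vec, hlt, ← hij]
            ring
      rw [this, abs_zero]; positivity
  calc _ ≤ ∑ φ : Fin T → Fin (T+1), |Matrix.det (Matrix.of fun j => vec j (φ j))| := Finset.abs_sum_le_sum_abs _ _
    _ ≤ ∑ φ : Fin T → Fin (T+1), (T.factorial * F ^ T * (ρ ^ (T * (T - 1) / 2))⁻¹) := Finset.sum_le_sum fun φ _ => key φ
    _ = _ := by simp

open Polynomial in
theorem zero_est (K L R2 S N : ℕ) (x y : ℝ) (hx : 0 < x) (hx1 : x ≠ 1) (hy : y ≠ 0)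
    (hR : R2 ≤ N) (hcount : K * L ≤ R2 * S) (p : Fin K → Fin L → ℝ)
    (hvan : ∀ r < L + R2, ∀ s < S, ∑ i, ∑ j, p i j * ((r : ℝ) + s * N) ^ (i : ℕ) * (x ^ r * y ^ s) ^ (j : ℕ) = 0) :
    ∀ i j, p i j = 0 := by
  classical
  let P : Fin L → ℝ[X] := fun j => ∑ i, C (p i j) * X ^ (i : ℕ)
  have hPdeg : ∀ j, K ≠ 0 → (P j).natDegree ≤ K - 1 := by
    intro j hK
    apply natDegree_sum_le_of_forall_le
    intro i _
    refine (natDegree_C_mul_X_pow_le _ _).trans (by have := i.2; omega)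
  have hPcoeff : ∀ j (i : Fin K), (P j).coeff i = p i j := by
    intro j i
    simp only [P, finsetSum_coeff, coeff_C_mul_X_pow]
    rw [Finset.sum_eq_single i]
    · simp
    · intro b _ hb
      rw [if_neg]; intro h; exact hb (Fin.ext h.symm)
    · simp
  by_contra hne
  push Not at hne
  obtain ⟨i0, j0, hij⟩ := hne
  have hK : K ≠ 0 := by have := i0.2; omega
  let J : Finset (Fin L) := Finset.univ.filter (fun j => P j ≠ 0)
  have hj0 : j0 ∈ J := by
    simp only [J, Finset.mem_filter, Finset.mem_univ, true_and]
    intro h; apply hij; rw [← hPcoeff, h, coeff_zero]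
  let l := J.card
  have hlL : l ≤ L := by simpa using Finset.card_le_univ J
  have hl0 : 0 < l := Finset.card_pos.2 ⟨j0, hj0⟩
  let e : Fin l ≃ J := J.equivFin.symm
  have he : ∀ a, P (e a).1 ≠ 0 := fun a => (Finset.mem_filter.1 (e a).2).2
  let M : Matrix (Fin l) (Fin l) ℝ[X] := Matrix.of fun a b => taylor ((a : ℕ) : ℝ) (P (e b).1) * C ((x ^ ((e b).1 : ℕ)) ^ (a : ℕ))
  have hxe : ∀ b : Fin l, x ^ ((e b).1 : ℕ) ≠ 0 := fun b => by positivity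
  have hM0 : ∀ a b, M a b ≠ 0 := by
    intro a b
    simp only [M, Matrix.of_apply]
    apply mul_ne_zero
    · intro h
      exact he b (taylor_injective _ (by rw [h, map_zero]))
    · rw [Ne, C_eq_zero]; positivity
  have hMdeg : ∀ a b, (M a b).natDegree = (P (e b).1).natDegree := by
    intro a b
    simp only [M, Matrix.of_apply]
    rw [natDegree_mul_C (by positivity), natDegree_taylor]
  have hMlead : ∀ a b, (M a b).leadingCoeff = (P (e b).1).leadingCoeff * (x ^ ((e b).1 : ℕ)) ^ (a : ℕ) := by
    intro a b
    simp only [M, Matrix.of_apply, leadingCoeff_mul, leadingCoeff_C]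
    congr 1
    rw [taylor_apply, leadingCoeff_comp (by rw [natDegree_X_add_C]; norm_num), leadingCoeff_X_add_C]
    simp
  let d := ∑ b : Fin l, (P (e b).1).natDegree
  have hcoef : M.det.coeff d = (∏ b, (P (e b).1).leadingCoeff) * (Matrix.vandermonde (fun b : Fin l => x ^ ((e b).1 : ℕ))).transpose.det := by
    rw [← Matrix.det_mul_row]
    rw [Matrix.det_apply, Matrix.det_apply, finsetSum_coeff]
    apply Finset.sum_congr rfl
    intro σ _
    rw [coeff_smul]
    congr 1
    have h1 : d = (∏ b, M (σ b) b).natDegree := by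
      rw [natDegree_prod _ _ (fun b _ => hM0 _ _)]
      exact Finset.sum_congr rfl fun b _ => (hMdeg _ _).symm
    rw [h1, coeff_natDegree, leadingCoeff_prod]
    apply Finset.prod_congr rfl
    intro b _
    rw [hMlead]
    simp [Matrix.vandermonde]
  have hdet_ne : M.det ≠ 0 := by
    intro h
    rw [h, coeff_zero] at hcoef
    symm at hcoef
    rw [mul_eq_zero] at hcoef
    rcases hcoef with h1 | h1
    · rw [Finset.prod_eq_zero_iff] at h1
      obtain ⟨b, _, hb⟩ := h1
      exact he b (leadingCoeff_eq_zero.1 hb)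
    · rw [Matrix.det_transpose] at h1
      refine (Matrix.det_vandermonde_ne_zero_iff.2 ?_) h1
      intro a b hab
      have := pow_right_injective₀ hx hx1 hab
      exact e.injective (Subtype.ext (Fin.ext this))
  have hdeg : M.det.natDegree < R2 * S := by
    have h1 : M.det.natDegree ≤ l * (K - 1) := by
      rw [Matrix.det_apply]
      apply natDegree_sum_le_of_forall_le
      intro σ _
      refine (natDegree_smul_le _ _).trans ?_
      refine (natDegree_prod_le _ _).trans ?_
      have : ∑ i : Fin l, (M (σ i) i).natDegree ≤ ∑ i : Fin l, (K - 1) :=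
        Finset.sum_le_sum fun b _ => by rw [hMdeg]; exact hPdeg _ hK
      simpa using this
    have h2 : l * (K - 1) < K * L := by
      calc l * (K - 1) ≤ L * (K - 1) := Nat.mul_le_mul_right _ hlL
        _ < L * K := Nat.mul_lt_mul_of_pos_left (by omega) (by omega)
        _ = K * L := mul_comm _ _
    omega
  apply hdet_ne
  apply eq_zero_of_natDegree_lt_card_of_eval_eq_zero (ι := Fin R2 × Fin S) M.det
    (f := fun rs => ((rs.1 : ℕ) : ℝ) + (rs.2 : ℕ) * N)
  · rintro ⟨r, s⟩ ⟨r', s'⟩ h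
    simp only at h
    have h' : (r : ℕ) + s * N = r' + s' * N := by exact_mod_cast h
    have hr := r.2
    have hr' := r'.2
    have e1 : (r : ℕ) = r' := by
      have := congrArg (· % N) h'
      simpa [Nat.add_mul_mod_self_right, Nat.mod_eq_of_lt (lt_of_lt_of_le hr hR), Nat.mod_eq_of_lt (lt_of_lt_of_le hr' hR)] using this
    have e2 : (s : ℕ) = s' := by
      rw [e1] at h'
      have : (s : ℕ) * N = s' * N := by omega
      exact Nat.eq_of_mul_eq_mul_right (by omega) this
    ext <;> assumption
  · rintro ⟨r, s⟩
    simp only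
    rw [← coe_evalRingHom, RingHom.map_det, ← Matrix.exists_mulVec_eq_zero_iff]
    refine ⟨fun b => (x ^ (r : ℕ) * y ^ (s : ℕ)) ^ ((e b).1 : ℕ), ?_, ?_⟩
    · intro h
      have := congrFun h ⟨0, hl0⟩
      simp at this
      have h1 : x ^ (r : ℕ) * y ^ (s : ℕ) ≠ 0 := mul_ne_zero (by positivity) (pow_ne_zero _ hy)
      simp [hx.ne', hy] at this
    · ext a
      have hv := hvan (r + a) (by have := r.2; have := a.2; omega) s s.2
      rw [Finset.sum_comm] at hv
      simp only [Matrix.mulVec, dotProduct, RingHom.mapMatrix_apply, Matrix.map_apply, coe_evalRingHom, M, Matrix.of_apply, eval_mul, eval_C, taylor_eval, Pi.zero_apply]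
      rw [← Equiv.sum_comp e.symm]
      simp only [Equiv.apply_symm_apply]
      rw [← hv]
      rw [← Finset.sum_subset (Finset.subset_univ J)]
      · rw [← Finset.sum_coe_sort J]
        apply Finset.sum_congr rfl
        intro j _
        simp only [P, eval_finsetSum, eval_mul, eval_C, eval_pow, eval_X]
        rw [Finset.sum_mul, Finset.sum_mul]
        apply Finset.sum_congr rfl
        intro i _
        push_cast
        rw [show ((r : ℕ) : ℝ) + (s : ℕ) * N + (a : ℕ) = (r : ℕ) + (a : ℕ) + (s : ℕ) * N by ring]
        ring
      · intro j _ hj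
        have hPj : P j = 0 := by
          by_contra h
          exact hj (Finset.mem_filter.2 ⟨Finset.mem_univ _, h⟩)
        apply Finset.sum_eq_zero
        intro i _
        rw [← hPcoeff, hPj]; simp
  · simpa using hdeg

theorem exists_minor {ι κ : Type*} [Fintype ι] [Fintype κ] [DecidableEq κ]
    (A : Matrix ι κ ℝ) (h : ∀ v : κ → ℝ, A.mulVec v = 0 → v = 0) :
    ∃ f : κ → ι, (A.submatrix f id).det ≠ 0 := by
  classical
  have hspan : Submodule.span ℝ (Set.range A.row) = ⊤ := by
    have h1 : A.rank = Fintype.card κ := by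
      rw [Matrix.rank, LinearMap.finrank_range_of_inj]
      · simp
      · rw [← LinearMap.ker_eq_bot, LinearMap.ker_eq_bot']
        intro v hv
        exact h v hv
    rw [Matrix.rank_eq_finrank_span_row] at h1
    apply Submodule.eq_top_of_finrank_eq
    rw [h1]; simp
  obtain ⟨s, hs1, hs2, hs3⟩ := exists_linearIndependent ℝ (Set.range A.row)
  rw [hspan] at hs2
  let b : Module.Basis s ℝ (κ → ℝ) := Module.Basis.mk hs3 (by simp [hs2])
  have : Finite s := Set.Finite.subset (Set.finite_range _) hs1
  have : Fintype s := Fintype.ofFinite s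
  have hcard : Fintype.card s = Fintype.card κ := by
    rw [← Module.finrank_eq_card_basis b]; simp
  let e : κ ≃ s := (Fintype.equivOfCardEq hcard).symm
  choose g hg using fun a : s => hs1 a.2
  refine ⟨fun j => g (e j), ?_⟩
  have hli : LinearIndependent ℝ (fun j => A.row (g (e j))) := by
    have : (fun j => A.row (g (e j))) = (fun a : s => (a : κ → ℝ)) ∘ e := by
      funext j; exact hg (e j)
    rw [this]
    exact hs3.comp _ e.injective
  have := (Matrix.linearIndependent_rows_iff_isUnit (A := A.submatrix (fun j => g (e j)) id)).1 hli
  rw [Matrix.isUnit_iff_isUnit_det] at this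
  exact this.ne_zero

theorem liouville_det {K : Type*} [Field K] [NumberField K] (φ : K →+* ℝ) {n : Type*} [Fintype n]
    [DecidableEq n] (A : Matrix n n K) (hint : ∀ i j, IsIntegral ℤ (A i j)) (hdet : A.det ≠ 0)
    (E : ℝ) (hE : 1 ≤ E) (hb : ∀ (σ : K →+* ℂ) i j, ‖σ (A i j)‖ ≤ E) (D : ℕ)
    (hD : Module.finrank ℚ K ≤ D) :
    1 ≤ |φ A.det| * ((Fintype.card n).factorial * E ^ (Fintype.card n)) ^ (D - 1) := by
  classical
  set B : ℝ := (Fintype.card n).factorial * E ^ (Fintype.card n) with hB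
  have hB1 : 1 ≤ B := by
    have h1 : (1 : ℝ) ≤ (Fintype.card n).factorial := by exact_mod_cast Nat.factorial_pos _
    have h2 : 1 ≤ E ^ (Fintype.card n) := one_le_pow₀ hE
    nlinarith
  have hσ : ∀ σ : K →+* ℂ, ‖σ A.det‖ ≤ B := by
    intro σ
    rw [RingHom.map_det]
    have h3 := Matrix.det_le (A := σ.mapMatrix A) (abv := (NormedField.toAbsoluteValue ℂ)) (x := E) (by
      intro i j
      exact hb σ i j)
    rw [nsmul_eq_mul] at h3
    exact h3
  have hI : IsIntegral ℤ A.det := by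
    rw [Matrix.det_apply]
    apply IsIntegral.sum
    intro σ _
    have : IsIntegral ℤ (∏ i, A (σ i) i) := IsIntegral.prod _ fun i _ => hint _ _
    rcases Int.units_eq_one_or (Equiv.Perm.sign σ) with h | h <;> rw [h]
    · simpa using this
    · simpa using this.neg
  have hnI : IsIntegral ℤ (Algebra.norm ℚ A.det) := Algebra.isIntegral_norm ℚ hI
  obtain ⟨z, hz⟩ := IsIntegrallyClosed.isIntegral_iff.1 hnI
  have hn0 : Algebra.norm ℚ A.det ≠ 0 := Algebra.norm_ne_zero_iff.2 hdet
  have hz0 : z ≠ 0 := by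
    rintro rfl; apply hn0; rw [← hz]; simp
  have hz1 : (1 : ℝ) ≤ |(z : ℝ)| := by exact_mod_cast Int.one_le_abs hz0
  have hprod := Algebra.norm_eq_prod_embeddings ℚ ℂ A.det
  have hnorm : ‖(algebraMap ℚ ℂ) (Algebra.norm ℚ A.det)‖ = |(z : ℝ)| := by
    rw [← hz]; simp
  let σ0 : K →ₐ[ℚ] ℂ := RingHom.toRatAlgHom ((Complex.ofRealHom).comp φ)
  rw [hprod, norm_prod, ← Finset.mul_prod_erase _ _ (Finset.mem_univ σ0)] at hnorm
  have h0 : ‖σ0 A.det‖ = |φ A.det| := by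
    change ‖((φ A.det : ℝ) : ℂ)‖ = _
    simp
  rw [h0] at hnorm
  rw [← hnorm] at hz1
  refine hz1.trans ?_
  apply mul_le_mul_of_nonneg_left _ (abs_nonneg _)
  calc ∏ σ ∈ Finset.univ.erase σ0, ‖σ A.det‖ ≤ ∏ σ ∈ Finset.univ.erase σ0, B :=
        Finset.prod_le_prod (fun _ _ => norm_nonneg _) (fun σ _ => hσ σ.toRingHom)
    _ = B ^ (Fintype.card (K →ₐ[ℚ] ℂ) - 1) := by simp
    _ ≤ B ^ (D - 1) := by
        apply pow_le_pow_right₀ hB1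
        rw [AlgHom.card]
        omega

theorem exp_tail (w ρ : ℝ) (hρ : 1 ≤ ρ) (M : ℕ) :
    |Real.exp w - ∑ m ∈ Finset.range M, w ^ m / m.factorial| ≤ (ρ ^ M)⁻¹ * Real.exp (ρ * |w|) := by
  have hs : ∀ y : ℝ, HasSum (fun m : ℕ => y ^ m / m.factorial) (Real.exp y) := by
    intro y
    rw [Real.exp_eq_exp_ℝ]
    exact NormedSpace.expSeries_div_hasSum_exp y
  have h1 : HasSum (fun m : ℕ => w ^ (m + M) / (m + M).factorial) (Real.exp w - ∑ m ∈ Finset.range M, w ^ m / m.factorial) :=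
    (hasSum_nat_add_iff' M).2 (hs w)
  have h2 : HasSum (fun m : ℕ => (ρ * |w|) ^ (m + M) / (m + M).factorial) (Real.exp (ρ * |w|) - ∑ m ∈ Finset.range M, (ρ * |w|) ^ m / m.factorial) :=
    (hasSum_nat_add_iff' M).2 (hs (ρ * |w|))
  have h3 := h2.mul_left ((ρ ^ M)⁻¹)
  have hρ0 : 0 < ρ := by linarith
  have h4 : ‖Real.exp w - ∑ m ∈ Finset.range M, w ^ m / m.factorial‖ ≤ (ρ ^ M)⁻¹ * (Real.exp (ρ * |w|) - ∑ m ∈ Finset.range M, (ρ * |w|) ^ m / m.factorial) := by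
    rw [← h1.tsum_eq]
    apply tsum_of_norm_bounded h3
    intro m
    rw [norm_div, norm_pow, Real.norm_eq_abs, mul_pow, pow_add ρ]
    have : (1:ℝ) ≤ ρ ^ m := one_le_pow₀ hρ
    rw [Real.norm_of_nonneg (by positivity : (0:ℝ) ≤ ((m+M).factorial : ℝ))]
    have e : (ρ ^ M)⁻¹ * (ρ ^ m * ρ ^ M * |w| ^ (m + M) / (m + M).factorial) = ρ ^ m * (|w| ^ (m + M) / (m + M).factorial) := by
      field_simp
    rw [e]
    apply le_mul_of_one_le_left _ this
    positivity
  rw [Real.norm_eq_abs] at h4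
  refine h4.trans ?_
  apply mul_le_mul_of_nonneg_left _ (by positivity)
  have : 0 ≤ ∑ m ∈ Finset.range M, (ρ * |w|) ^ m / m.factorial := Finset.sum_nonneg fun m _ => by positivity
  linarith

noncomputable def cExp (i : ℕ) (g X : ℝ) (n : ℕ) : ℝ :=
  if i ≤ n then g ^ (n - i) / (n - i).factorial * X ^ n else 0

theorem cExp_bound (i : ℕ) (g X ρ : ℝ) (hX : 1 ≤ X) (hρ : 1 ≤ ρ) (n : ℕ) :
    |cExp i g X n| ≤ (ρ * X) ^ i * Real.exp (ρ * (|g| * X)) * (ρ ^ n)⁻¹ := by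
  unfold cExp
  have hX0 : 0 < X := by linarith
  have hρ0 : 0 < ρ := by linarith
  split_ifs with h
  · obtain ⟨m, rfl⟩ := Nat.exists_eq_add_of_le h
    simp only [Nat.add_sub_cancel_left]
    rw [abs_mul, abs_div, abs_pow, abs_of_pos (by positivity : 0 < X ^ (i+m)), abs_of_pos (by positivity : (0:ℝ) < (m.factorial : ℝ))]
    have h1 := Real.pow_div_factorial_le_exp (ρ * (|g| * X)) (by positivity) m
    rw [← div_eq_mul_inv, le_div_iff₀ (by positivity)]
    calc |g| ^ m / m.factorial * X ^ (i + m) * ρ ^ (i + m) = (ρ * X) ^ i * ((ρ * (|g| * X)) ^ m / m.factorial) := by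
          rw [pow_add, pow_add, mul_pow, mul_pow, mul_pow]; ring
      _ ≤ _ := by gcongr
  · rw [abs_zero]; positivity

theorem entry_expand (i M : ℕ) (g X ρ z : ℝ) (hX : 1 ≤ X) (hρ : 1 ≤ ρ) (hz0 : 0 ≤ z) (hz : z ≤ X) :
    |z ^ i * Real.exp (g * z) - ∑ n ∈ Finset.range (i + M), cExp i g X n * (z / X) ^ n| ≤
      (ρ * X) ^ i * Real.exp (ρ * (|g| * X)) * (ρ ^ (i + M))⁻¹ := by
  have hX0 : 0 < X := by linarith
  have hρ0 : 0 < ρ := by linarith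
  have h1 : ∑ n ∈ Finset.range (i + M), cExp i g X n * (z / X) ^ n = z ^ i * ∑ m ∈ Finset.range M, (g * z) ^ m / m.factorial := by
    rw [Finset.sum_range_add]
    have : ∑ n ∈ Finset.range i, cExp i g X n * (z / X) ^ n = 0 := by
      apply Finset.sum_eq_zero
      intro n hn
      rw [Finset.mem_range] at hn
      rw [cExp, if_neg (by omega), zero_mul]
    rw [this, zero_add, Finset.mul_sum]
    apply Finset.sum_congr rfl
    intro m _
    rw [cExp, if_pos (by omega), Nat.add_sub_cancel_left, div_pow, mul_pow, pow_add z]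
    field_simp
  rw [h1, ← mul_sub, abs_mul, abs_of_nonneg (by positivity)]
  have h2 := exp_tail (g * z) ρ hρ M
  calc _ ≤ X ^ i * ((ρ ^ M)⁻¹ * Real.exp (ρ * |g * z|)) := by gcongr
    _ ≤ X ^ i * ((ρ ^ M)⁻¹ * Real.exp (ρ * (|g| * X))) := by
        rw [abs_mul, abs_of_nonneg hz0]; gcongr
    _ = _ := by rw [mul_pow, pow_add]; field_simp

theorem two_log_entry (κ L S : ℕ) (i j s T : ℕ) (hi : i < κ) (hj : j < L) (hs : s < S) (hT : κ ≤ T)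
    (ζ ell Λ X ρ G : ℝ) (hX : 1 ≤ X) (hρ : 1 ≤ ρ) (hz0 : 0 ≤ ζ) (hz : ζ ≤ X) (hG : |ell| * X ≤ G)
    (hΛ : 2 * (L * S) * |Λ| ≤ (ρ ^ T)⁻¹) :
    |ζ ^ i * Real.exp (j * (ell * ζ + s * Λ)) - ∑ n ∈ Finset.range T, cExp i (j * ell) X n * (ζ / X) ^ n| ≤
      (2 * ((ρ * X) ^ κ * Real.exp (L * (ρ * G)))) * (ρ ^ T)⁻¹ := by
  have hρ0 : 0 < ρ := by linarith
  have hX0 : 0 < X := by linarith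
  set F : ℝ := (ρ * X) ^ κ * Real.exp (L * (ρ * G)) with hF
  have hG0 : 0 ≤ G := le_trans (by positivity) hG
  have hjL : (j : ℝ) ≤ L := by exact_mod_cast hj.le
  have hsS : (s : ℝ) ≤ S := by exact_mod_cast hs.le
  have hρX : 1 ≤ ρ * X := by nlinarith
  have hgG : |(j : ℝ) * ell| * X ≤ L * G := by
    rw [abs_mul, abs_of_nonneg (Nat.cast_nonneg j), mul_assoc]
    gcongr
  have hFle : (ρ * X) ^ i * Real.exp (ρ * (|(j : ℝ) * ell| * X)) ≤ F := by
    apply mul_le_mul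
    · exact pow_le_pow_right₀ hρX hi.le
    · apply Real.exp_le_exp.2
      calc _ ≤ ρ * (L * G) := by gcongr
        _ = _ := by ring
    · positivity
    · positivity
  have h1 := entry_expand i (T - i) (j * ell) X ρ ζ hX hρ hz0 hz
  rw [Nat.add_sub_cancel' (by omega)] at h1
  have h1' := h1.trans (mul_le_mul_of_nonneg_right hFle (by positivity : (0:ℝ) ≤ (ρ ^ T)⁻¹))
  have hbase : ζ ^ i * Real.exp (j * ell * ζ) ≤ F := by
    refine le_trans ?_ hFle
    apply mul_le_mul
    · gcongr; nlinarith
    · apply Real.exp_le_exp.2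
      calc (j * ell * ζ : ℝ) ≤ |(j:ℝ) * ell| * X := by
            apply le_trans (le_abs_self _)
            rw [abs_mul, abs_of_nonneg hz0]; gcongr
        _ ≤ _ := le_mul_of_one_le_left (by positivity) hρ
    · positivity
    · positivity
  have hjs : 2 * |(j * (s * Λ) : ℝ)| ≤ (ρ ^ T)⁻¹ := by
    refine le_trans ?_ hΛ
    rw [abs_mul, abs_mul, abs_of_nonneg (Nat.cast_nonneg j), abs_of_nonneg (Nat.cast_nonneg s)]
    have : (j : ℝ) * (s * |Λ|) ≤ L * (S * |Λ|) := by gcongr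
    linarith
  have hle1 : (ρ ^ T)⁻¹ ≤ 1 := inv_le_one_of_one_le₀ (one_le_pow₀ hρ)
  have h2 := Real.abs_exp_sub_one_le (x := j * (s * Λ)) (by linarith [abs_nonneg ((j * (s * Λ) : ℝ))])
  have h3 : |ζ ^ i * Real.exp (j * (ell * ζ + s * Λ)) - ζ ^ i * Real.exp (j * ell * ζ)| ≤ F * (ρ ^ T)⁻¹ := by
    have : ζ ^ i * Real.exp (j * (ell * ζ + s * Λ)) - ζ ^ i * Real.exp (j * ell * ζ) =
        ζ ^ i * Real.exp (j * ell * ζ) * (Real.exp (j * (s * Λ)) - 1) := by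
      rw [show (j * (ell * ζ + s * Λ) : ℝ) = j * ell * ζ + j * (s * Λ) by ring, Real.exp_add]; ring
    rw [this, abs_mul, abs_of_nonneg (by positivity)]
    apply mul_le_mul hbase (h2.trans hjs) (abs_nonneg _) (by positivity)
  have := abs_sub_le (ζ ^ i * Real.exp (j * (ell * ζ + s * Λ))) (ζ ^ i * Real.exp (j * ell * ζ)) (∑ n ∈ Finset.range T, cExp i (j * ell) X n * (ζ / X) ^ n)
  linarith

theorem two_log {K : Type*} [Field K] [NumberField K] (φ : K →+* ℝ) (D : ℕ) (hD1 : 1 ≤ D)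
    (hD : Module.finrank ℚ K ≤ D) (u1 u2 v1 v2 : K)
    (iu1 : IsIntegral ℤ u1) (iu2 : IsIntegral ℤ u2) (iv1 : IsIntegral ℤ v1) (iv2 : IsIntegral ℤ v2)
    (H1 H2 : ℝ) (hH1 : 0 ≤ H1) (hH2 : 0 ≤ H2)
    (bu1 : ∀ σ : K →+* ℂ, ‖σ u1‖ ≤ Real.exp H1) (bu2 : ∀ σ : K →+* ℂ, ‖σ u2‖ ≤ Real.exp H1)
    (bv1 : ∀ σ : K →+* ℂ, ‖σ v1‖ ≤ Real.exp H2) (bv2 : ∀ σ : K →+* ℂ, ‖σ v2‖ ≤ Real.exp H2)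
    (pu2 : 0 < φ u2) (pv2 : 0 < φ v2) (N κ L R2 S : ℕ) (ell Λ : ℝ) (hell : ell ≠ 0)
    (hu : φ u1 = Real.exp ell * φ u2) (hv : φ v1 = Real.exp (Λ + N * ell) * φ v2)
    (hR2 : R2 ≤ N) (hcount : κ * L ≤ R2 * S) (hL : 1 ≤ L) (hκ : 1 ≤ κ)
    (X ρ G : ℝ) (hX1 : 1 ≤ X) (hX : (L + R2 + S * N : ℝ) ≤ X) (hρ : 1 ≤ ρ) (hG : |ell| * X ≤ G)
    (hΛ : 2 * (L * S) * |Λ| ≤ (ρ ^ (κ * L))⁻¹)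
    (hbig : (((κ * L : ℕ) + 1 : ℝ) * ((κ * L : ℕ) : ℝ) * (2 * ((ρ * X) ^ κ * Real.exp (L * (ρ * G)))) *
      ((κ * L : ℕ) * (X ^ κ * Real.exp (L * ((L + R2) * H1 + S * H2)))) ^ D) ^ 2 < ρ ^ (κ * L - 1)) : False := by
  classical
  set T := κ * L with hT
  set F : ℝ := (ρ * X) ^ κ * Real.exp (L * (ρ * G)) with hF
  set W : ℝ := Real.exp (L * ((L + R2) * H1 + S * H2)) with hW
  set E : ℝ := X ^ κ * W with hE
  have hρ0 : 0 < ρ := by linarith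
  have hX0 : 0 < X := by linarith
  have hG0 : 0 ≤ G := le_trans (by positivity) hG
  have hTκ : κ ≤ T := Nat.le_mul_of_pos_right _ hL
  set x := Real.exp ell with hx
  set y := Real.exp (Λ + N * ell) with hy
  let A0 : Matrix (Fin (L + R2) × Fin S) (Fin κ × Fin L) ℝ := fun rs ij =>
    ((rs.1 : ℕ) + (rs.2 : ℕ) * (N : ℝ)) ^ (ij.1 : ℕ) * (x ^ (rs.1 : ℕ) * y ^ (rs.2 : ℕ)) ^ (ij.2 : ℕ)
  obtain ⟨f, hf⟩ := exists_minor A0 (by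
    intro v hv0
    have := zero_est κ L R2 S N x y (Real.exp_pos _) (by rw [hx]; simpa using hell) (Real.exp_pos _).ne' hR2 hcount
      (fun i j => v (i, j)) (by
        intro r hr s hs
        have h1 := congrFun hv0 (⟨r, hr⟩, ⟨s, hs⟩)
        simp only [Matrix.mulVec, dotProduct, Fintype.sum_prod_type, Pi.zero_apply] at h1
        rw [← h1]
        refine Finset.sum_congr rfl fun i _ => Finset.sum_congr rfl fun j _ => ?_
        simp only [A0]; ring)
    funext ij
    exact this ij.1 ij.2)
  -- upper bound
  have hW1 : 1 ≤ W := Real.one_le_exp (by positivity)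
  have hE1 : 1 ≤ E := by have : 1 ≤ X ^ κ := one_le_pow₀ hX1; nlinarith
  have hζ0 : ∀ rs : Fin (L + R2) × Fin S, (0:ℝ) ≤ (rs.1 : ℕ) + (rs.2 : ℕ) * (N : ℝ) := fun rs => by positivity
  have hζX : ∀ rs : Fin (L + R2) × Fin S, ((rs.1 : ℕ) + (rs.2 : ℕ) * (N : ℝ)) ≤ X := by
    intro rs
    refine le_trans ?_ hX
    have h1 : ((rs.1 : ℕ) : ℝ) ≤ (L + R2 : ℕ) := by exact_mod_cast rs.1.2.le
    have h2 : ((rs.2 : ℕ) : ℝ) ≤ S := by exact_mod_cast rs.2.2.le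
    push_cast at h1
    have : ((rs.2 : ℕ) : ℝ) * N ≤ S * N := by gcongr
    linarith
  let e : Fin κ × Fin L ≃ Fin T := finProdFinEquiv
  have hup : |(A0.submatrix f id).det| ≤ (T+1:ℝ)^T*(T.factorial*(2 * F)^T*(ρ^(T*(T-1)/2))⁻¹) := by
    rw [← Matrix.det_submatrix_equiv_self e.symm]
    apply det_upper T (2 * F) ρ (by positivity) hρ _
      (fun r => ((((f (e.symm r)).1 : ℕ) + ((f (e.symm r)).2 : ℕ) * (N : ℝ)) / X))
      _ (fun j n => cExp (e.symm j).1 (((e.symm j).2 : ℕ) * ell) X n)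
    · intro j n _
      refine (cExp_bound _ _ X ρ hX1 hρ n).trans ?_
      apply mul_le_mul_of_nonneg_right _ (by positivity)
      have hρX : 1 ≤ ρ * X := by nlinarith
      have hi := (e.symm j).1.2
      have hj := (e.symm j).2.2
      have hgG : |(((e.symm j).2 : ℕ) : ℝ) * ell| * X ≤ L * G := by
        rw [abs_mul, abs_of_nonneg (Nat.cast_nonneg _), mul_assoc]
        gcongr
      have : (ρ * X) ^ ((e.symm j).1 : ℕ) * Real.exp (ρ * (|(((e.symm j).2 : ℕ) : ℝ) * ell| * X)) ≤ F := by
        apply mul_le_mul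
        · exact pow_le_pow_right₀ hρX hi.le
        · apply Real.exp_le_exp.2
          calc _ ≤ ρ * (L * G) := by gcongr
            _ = _ := by ring
        · positivity
        · positivity
      have hF0 : 0 ≤ F := by positivity
      linarith
    · intro r j
      have h := two_log_entry κ L S (e.symm j).1 (e.symm j).2 (f (e.symm r)).2 T (e.symm j).1.2 (e.symm j).2.2
        (f (e.symm r)).2.2 hTκ (((f (e.symm r)).1 : ℕ) + ((f (e.symm r)).2 : ℕ) * (N : ℝ)) ell Λ X ρ G hX1 hρ
        (hζ0 _) (hζX _) hG hΛ
      convert h using 3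
      change ((_ : ℝ) * (_ : ℝ) : ℝ) = _
      refine congrArg₂ (· * ·) rfl ?_
      rw [hx, hy, ← Real.exp_nat_mul, ← Real.exp_nat_mul, ← Real.exp_add, ← Real.exp_nat_mul]
      congr 1
      simp only [id]
      ring
    · intro r
      rw [abs_of_nonneg (div_nonneg (hζ0 _) hX0.le)]
      exact div_le_one_of_le₀ (hζX _) hX0.le
  -- lower bound
  let wt : Fin κ × Fin L → K := fun c => u2 ^ ((f c).1 : ℕ) * v2 ^ ((f c).2 : ℕ)
  let AK : Matrix (Fin κ × Fin L) (Fin κ × Fin L) K := fun c ij =>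
    (((((f c).1 : ℕ) + ((f c).2 : ℕ) * N : ℕ) : K)) ^ (ij.1 : ℕ) *
      ((u1 ^ ((f c).1 : ℕ) * v1 ^ ((f c).2 : ℕ)) ^ (ij.2 : ℕ) * (wt c) ^ (L - 1 - (ij.2 : ℕ)))
  have hφ : ∀ c ij, φ (AK c ij) = (φ (wt c)) ^ (L - 1) * (A0.submatrix f id) c ij := by
    intro c ij
    have hj := ij.2.2
    have : L - 1 = (L - 1 - (ij.2 : ℕ)) + (ij.2 : ℕ) := by omega
    have e1 : (A0.submatrix f id) c ij = (((f c).1 : ℕ) + ((f c).2 : ℕ) * (N : ℝ)) ^ (ij.1 : ℕ) * (x ^ ((f c).1 : ℕ) * y ^ ((f c).2 : ℕ)) ^ (ij.2 : ℕ) := rfl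
    rw [this, pow_add, e1]
    simp only [AK, wt, map_mul, map_pow, map_natCast, hu, hv]
    push_cast
    simp only [mul_pow]
    ring
  have hdetφ : φ AK.det = (∏ c, (φ (wt c)) ^ (L - 1)) * (A0.submatrix f id).det := by
    rw [RingHom.map_det, ← Matrix.det_mul_column]
    congr 1
    ext c ij
    exact hφ c ij
  have hu2le : φ u2 ≤ Real.exp H1 := by
    have := bu2 (Complex.ofRealHom.comp φ)
    simpa [abs_of_pos pu2] using this
  have hv2le : φ v2 ≤ Real.exp H2 := by
    have := bv2 (Complex.ofRealHom.comp φ)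
    simpa [abs_of_pos pv2] using this
  have hexp : ∀ (r s : ℕ), r ≤ L + R2 → s ≤ S → Real.exp H1 ^ r * Real.exp H2 ^ s ≤ Real.exp ((L + R2) * H1 + S * H2) := by
    intro r s hr hs
    rw [← Real.exp_nat_mul, ← Real.exp_nat_mul, ← Real.exp_add]
    apply Real.exp_le_exp.2
    have h1 : (r : ℝ) ≤ L + R2 := by exact_mod_cast hr
    have h2 : (s : ℝ) ≤ S := by exact_mod_cast hs
    gcongr
  set W0 := Real.exp ((L + R2) * H1 + S * H2) with hW0
  have hW01 : 1 ≤ W0 := Real.one_le_exp (by positivity)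
  have hWW0 : W0 ^ L = W := by rw [hW0, ← Real.exp_nat_mul]
  have hwpos : ∀ c, 0 < φ (wt c) := fun c => by simp only [wt, map_mul, map_pow]; positivity
  have hwle : ∀ c, φ (wt c) ^ (L - 1) ≤ E := by
    intro c
    have h1 : φ (wt c) ≤ W0 := by
      simp only [wt, map_mul, map_pow]
      refine le_trans ?_ (hexp (f c).1 (f c).2 (f c).1.2.le (f c).2.2.le)
      gcongr
    calc _ ≤ W0 ^ (L - 1) := pow_le_pow_left₀ (hwpos c).le h1 _
      _ ≤ W0 ^ L := pow_le_pow_right₀ hW01 (by omega)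
      _ = W := hWW0
      _ ≤ E := le_mul_of_one_le_left (by linarith) (one_le_pow₀ hX1)
  have hdet0 : AK.det ≠ 0 := by
    intro h
    rw [h, map_zero] at hdetφ
    rcases mul_eq_zero.1 hdetφ.symm with h1 | h1
    · exact (Finset.prod_pos fun c _ => pow_pos (hwpos c) (L - 1)).ne' h1
    · exact hf h1
  have hlow := liouville_det φ AK (by
    intro c ij
    refine IsIntegral.mul (IsIntegral.pow ?_ _) (IsIntegral.mul (IsIntegral.pow ((iu1.pow _).mul (iv1.pow _)) _) (IsIntegral.pow ((iu2.pow _).mul (iv2.pow _)) _))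
    exact isIntegral_algebraMap (R := ℤ) (A := K) (x := (((((f c).1 : ℕ) + ((f c).2 : ℕ) * N : ℕ)) : ℤ)) |> fun h => by simpa using h)
    hdet0 E hE1 (by
    intro σ c ij
    have hj := ij.2.2
    simp only [AK, wt, map_mul, map_pow, map_natCast, norm_mul, norm_pow, Complex.norm_natCast]
    have h1 : ‖σ u1‖ ^ ((f c).1 : ℕ) * ‖σ v1‖ ^ ((f c).2 : ℕ) ≤ W0 := by
      refine le_trans ?_ (hexp (f c).1 (f c).2 (f c).1.2.le (f c).2.2.le)
      gcongr
      · exact bu1 σ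
      · exact bv1 σ
    have h2 : ‖σ u2‖ ^ ((f c).1 : ℕ) * ‖σ v2‖ ^ ((f c).2 : ℕ) ≤ W0 := by
      refine le_trans ?_ (hexp (f c).1 (f c).2 (f c).1.2.le (f c).2.2.le)
      gcongr
      · exact bu2 σ
      · exact bv2 σ
    have h3 : ((((f c).1 : ℕ) + ((f c).2 : ℕ) * N : ℕ) : ℝ) ≤ X := by
      have := hζX (f c); push_cast; exact this
    apply mul_le_mul
    · calc _ ≤ X ^ (ij.1 : ℕ) := by gcongr
        _ ≤ X ^ κ := pow_le_pow_right₀ hX1 ij.1.2.le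
    · calc _ ≤ W0 ^ (ij.2 : ℕ) * W0 ^ (L - 1 - (ij.2 : ℕ)) := by gcongr
        _ = W0 ^ (L - 1) := by rw [← pow_add]; congr 1; omega
        _ ≤ W0 ^ L := pow_le_pow_right₀ hW01 (by omega)
        _ = W := hWW0
    · positivity
    · positivity) D hD
  have hcard : Fintype.card (Fin κ × Fin L) = T := by simp [hT]
  rw [hcard, hdetφ, abs_mul] at hlow
  have hprod : |∏ c, (φ (wt c)) ^ (L - 1)| ≤ E ^ T := by
    rw [abs_of_pos (Finset.prod_pos fun c _ => pow_pos (hwpos c) (L - 1)), ← hcard, ← Finset.card_univ]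
    calc _ ≤ ∏ c : Fin κ × Fin L, E := Finset.prod_le_prod (fun c _ => (pow_pos (hwpos c) _).le) (fun c _ => hwle c)
      _ = _ := by simp
  have hfac : (T.factorial : ℝ) ≤ (T : ℝ) ^ T := by exact_mod_cast Nat.factorial_le_pow T
  have hfac1 : (1 : ℝ) ≤ T.factorial := by exact_mod_cast Nat.factorial_pos T
  have hfin : 1 ≤ ((T + 1 : ℝ) * T * (2 * F) * (T * E) ^ D) ^ T * (ρ^(T*(T-1)/2))⁻¹ := by
    set P := |∏ c, (φ (wt c)) ^ (L - 1)| with hP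
    set Δ := |(A0.submatrix f id).det| with hΔ
    calc (1:ℝ) ≤ P * Δ * (T.factorial * E ^ T) ^ (D - 1) := hlow
      _ ≤ E ^ T * ((T+1:ℝ)^T*(T.factorial*(2 * F)^T*(ρ^(T*(T-1)/2))⁻¹)) * (T.factorial * E ^ T) ^ (D - 1) := by
          gcongr
      _ ≤ (T.factorial * E ^ T) * ((T+1:ℝ)^T*(T.factorial*(2 * F)^T*(ρ^(T*(T-1)/2))⁻¹)) * (T.factorial * E ^ T) ^ (D - 1) := by
          gcongr
          exact le_mul_of_one_le_left (by positivity) hfac1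
      _ = ((T+1:ℝ)^T*(T.factorial*(2 * F)^T*(ρ^(T*(T-1)/2))⁻¹)) * (T.factorial * E ^ T) ^ D := by
          obtain ⟨D', rfl⟩ : ∃ D', D = D' + 1 := ⟨D - 1, by omega⟩
          simp only [Nat.add_sub_cancel]; ring
      _ ≤ ((T+1:ℝ)^T*((T:ℝ)^T*(2 * F)^T*(ρ^(T*(T-1)/2))⁻¹)) * ((T:ℝ) ^ T * E ^ T) ^ D := by
          gcongr
      _ = _ := by simp only [mul_pow]; ring
  set Bb := ((T + 1 : ℝ) * T * (2 * F) * (T * E) ^ D) with hBb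
  have hB0 : 0 ≤ Bb := by positivity
  have h4 : ρ ^ (T*(T-1)/2) ≤ Bb ^ T := by
    rw [← div_eq_mul_inv, le_div_iff₀ (by positivity)] at hfin
    linarith
  have hT1 : 1 ≤ T := le_trans hκ hTκ
  have h5 : (ρ ^ (T - 1)) ^ T ≤ (Bb ^ 2) ^ T := by
    have h6 : T * (T - 1) / 2 * 2 = T * (T - 1) := Nat.div_mul_cancel (even_iff_two_dvd.1 (Nat.even_mul_pred_self T))
    calc (ρ ^ (T - 1)) ^ T = (ρ ^ (T*(T-1)/2)) ^ 2 := by rw [← pow_mul, ← pow_mul, h6, mul_comm]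
      _ ≤ (Bb ^ T) ^ 2 := pow_le_pow_left₀ (by positivity) h4 2
      _ = _ := by rw [← pow_mul, ← pow_mul, mul_comm]
  have h7 := (pow_le_pow_iff_left₀ (by positivity) (by positivity) (by omega)).1 h5
  exact absurd hbig (not_lt.2 h7)

theorem exp_six_le : Real.exp 6 ≤ 404 := by
  have h := Real.exp_one_lt_d9
  have : Real.exp 6 = Real.exp 1 ^ 6 := by rw [← Real.exp_nat_mul]; norm_num
  rw [this]
  calc Real.exp 1 ^ 6 ≤ (2.7182818286:ℝ) ^ 6 := pow_le_pow_left₀ (Real.exp_pos _).le h.le 6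
    _ ≤ 404 := by norm_num

theorem poly_exp_w (w : ℝ) (hw : 968 ≤ w) : 240000 * w ^ 3 ≤ Real.exp (0.05 * w) := by
  have h := Real.pow_div_factorial_le_exp (0.05 * w) (by linarith) 20
  refine le_trans ?_ h
  rw [le_div_iff₀ (by positivity)]
  have h2 : (968:ℝ) ^ 17 ≤ w ^ 17 := pow_le_pow_left₀ (by norm_num) hw 17
  have h3 : 0 ≤ w ^ 3 := by positivity
  calc 240000 * w ^ 3 * ((20 : ℕ).factorial : ℝ) ≤ w ^ 3 * (0.05 ^ 20 * 968 ^ 17) := by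
        rw [show ((20 : ℕ).factorial : ℝ) = 2432902008176640000 by norm_num [Nat.factorial]]
        nlinarith
    _ ≤ w ^ 3 * (0.05 ^ 20 * w ^ 17) := by gcongr
    _ = _ := by ring

theorem X_bound (w : ℕ) (hw : 968 ≤ w) : 240000 * (w:ℝ) ^ 3 * 2 ^ w ≤ Real.exp (0.75 * w) := by
  have h1 := poly_exp_w w (by exact_mod_cast hw)
  have h2 : (2:ℝ) ^ w ≤ Real.exp (0.7 * w) := by
    rw [← Real.exp_log (by norm_num : (0:ℝ) < 2), ← Real.exp_nat_mul]
    apply Real.exp_le_exp.2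
    have := Real.log_two_lt_d9
    have hw0 : (0:ℝ) ≤ w := by positivity
    nlinarith
  calc _ ≤ Real.exp (0.05 * w) * Real.exp (0.7 * w) := by gcongr
    _ = _ := by rw [← Real.exp_add]; congr 1; ring

set_option maxHeartbeats 1600000 in
theorem two_log_param {K : Type*} [Field K] [NumberField K] (φ : K →+* ℝ) (k : ℕ) (hk : 471 ≤ k)
    (hD : Module.finrank ℚ K ≤ k) (u1 u2 v1 v2 : K)
    (iu1 : IsIntegral ℤ u1) (iu2 : IsIntegral ℤ u2) (iv1 : IsIntegral ℤ v1) (iv2 : IsIntegral ℤ v2)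
    (H1 H2 : ℕ) (hH1 : 1 ≤ H1) (hH2 : 1 ≤ H2)
    (bu1 : ∀ σ : K →+* ℂ, ‖σ u1‖ ≤ Real.exp H1) (bu2 : ∀ σ : K →+* ℂ, ‖σ u2‖ ≤ Real.exp H1)
    (bv1 : ∀ σ : K →+* ℂ, ‖σ v1‖ ≤ Real.exp H2) (bv2 : ∀ σ : K →+* ℂ, ‖σ v2‖ ≤ Real.exp H2)
    (pu2 : 0 < φ u2) (pv2 : 0 < φ v2) (N w : ℕ) (ell Λ : ℝ) (hell : ell ≠ 0)
    (hu : φ u1 = Real.exp ell * φ u2) (hv : φ v1 = Real.exp (Λ + N * ell) * φ v2)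
    (hw : 968 ≤ w) (hkw : k ≤ 200 * w) (hHN : H1 * N ≤ 2 * 2 ^ w) (hN : 4 * k ^ 2 * w * H2 ≤ N)
    (hG : |ell| * N ≤ H2) :
    Real.exp (-(49 * (k:ℝ) ^ 4 * w ^ 2 * H1 * H2)) ≤ |Λ| := by
  by_contra hcon
  push Not at hcon
  have kR : (471:ℝ) ≤ k := by exact_mod_cast hk
  have wR : (968:ℝ) ≤ w := by exact_mod_cast hw
  have h1R : (1:ℝ) ≤ H1 := by exact_mod_cast hH1
  have h2R : (1:ℝ) ≤ H2 := by exact_mod_cast hH2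
  have kwR : (k:ℝ) ≤ 200 * w := by exact_mod_cast hkw
  have hHNR : (H1:ℝ) * N ≤ 2 * 2 ^ w := by exact_mod_cast hHN
  have hLN : k * w ≤ N := by
    refine le_trans ?_ hN
    calc k * w ≤ (k * w) * (4 * k * H2) := Nat.le_mul_of_pos_right _ (by positivity)
      _ = _ := by ring
  have hLNR : (k:ℝ) * w ≤ N := by exact_mod_cast hLN
  have hNR : 4 * (k:ℝ) ^ 2 * w * H2 ≤ N := by exact_mod_cast hN
  have hkw1 : (1:ℝ) ≤ k * w := one_le_mul_of_one_le_of_one_le (by linarith only [kR]) (by linarith only [wR])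
  have hN0 : (1:ℝ) ≤ N := hkw1.trans hLNR
  have hT : (8 * k ^ 3 * w * H1 * H2) * (k * w) = 8 * k ^ 4 * w ^ 2 * H1 * H2 := by ring
  set P : ℝ := (k:ℝ) ^ 4 * w ^ 2 * H1 * H2 with hP
  set X : ℝ := (2 * (k:ℝ) ^ 2 * w * H1 + 2) * N with hX
  have hXe : X ≤ Real.exp (0.75 * w) := by
    refine le_trans ?_ (X_bound w hw)
    have a1 : (1:ℝ) ≤ (k:ℝ) ^ 2 * w := one_le_mul_of_one_le_of_one_le (one_le_pow₀ (by linarith only [kR])) (by linarith only [wR])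
    have a2 : 2 * (k:ℝ) ^ 2 * w * H1 + 2 ≤ 3 * ((k:ℝ) ^ 2 * w) * H1 := by
      have : (471:ℝ)^2 * 968 * 1 ≤ (k:ℝ) ^ 2 * w * H1 := by gcongr
      norm_num at this
      linarith only [this]
    calc X ≤ 3 * ((k:ℝ) ^ 2 * w) * H1 * N := by rw [hX]; gcongr
      _ = 3 * ((k:ℝ) ^ 2 * w) * (H1 * N) := by ring
      _ ≤ 3 * ((200 * w : ℝ) ^ 2 * w) * (2 * 2 ^ w) := by gcongr
      _ = _ := by ring
  have hX1 : 1 ≤ X := by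
    rw [hX]
    have : (1:ℝ) ≤ 2 * (k:ℝ) ^ 2 * w * H1 + 2 := by
      have : (0:ℝ) ≤ 2 * (k:ℝ) ^ 2 * w * H1 := by positivity
      linarith only [this]
    exact one_le_mul_of_one_le_of_one_le this hN0
  have b1 : 471 * ((k:ℝ) ^ 3 * w ^ 2 * H1 * H2) ≤ P := by
    rw [hP]
    calc 471 * ((k:ℝ) ^ 3 * w ^ 2 * H1 * H2) ≤ k * ((k:ℝ) ^ 3 * w ^ 2 * H1 * H2) := by gcongr
      _ = _ := by ring
  have b3 : (k:ℝ) ^ 3 * w ^ 2 * H1 ≤ (k:ℝ) ^ 3 * w ^ 2 * H1 * H2 := le_mul_of_one_le_right (by positivity) h2R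
  have b4 : (1:ℝ) ≤ (k:ℝ) ^ 3 * w ^ 2 * H1 * H2 := by
    have : (1:ℝ) * 1 * 1 * 1 ≤ (k:ℝ) ^ 3 * w ^ 2 * H1 * H2 := by
      gcongr
      · exact one_le_pow₀ (by linarith)
      · exact one_le_pow₀ (by linarith)
    linarith
  have mono : ∀ (A B : ℝ), 0 ≤ A → 1 ≤ B → A ≤ A * B := fun A B hA hB => le_mul_of_one_le_right hA hB
  have k1 : (1:ℝ) ≤ k := by linarith
  have w1 : (1:ℝ) ≤ w := by linarith
  refine two_log φ k (by omega) hD u1 u2 v1 v2 iu1 iu2 iv1 iv2 H1 H2 (by positivity) (by positivity) bu1 bu2 bv1 bv2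
    pu2 pv2 N (8 * k ^ 3 * w * H1 * H2) (k * w) (4 * k ^ 2 * w * H2) (2 * k ^ 2 * w * H1) ell Λ hell hu hv hN
    (le_of_eq (by ring)) (Nat.mul_pos (by omega) (by omega)) ?_ X (Real.exp 6) ((2 * (k:ℝ) ^ 2 * w * H1 + 2) * H2) hX1 ?_
    (Real.one_le_exp (by norm_num)) ?_ ?_ ?_
  · have : 0 < 8 * k ^ 3 * w * H1 * H2 := by positivity
    omega
  · rw [hX]; push_cast; linarith only [hLNR, hNR]
  · calc |ell| * X = (2 * (k:ℝ) ^ 2 * w * H1 + 2) * (|ell| * N) := by rw [hX]; ring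
      _ ≤ _ := by gcongr
  · rw [hT, ← Real.exp_nat_mul, ← Real.exp_neg]
    push_cast
    have c1 : 2 * ((k:ℝ) * w * (2 * k ^ 2 * w * H1)) ≤ Real.exp P := by
      have := Real.add_one_le_exp P
      have e : 2 * ((k:ℝ) * w * (2 * k ^ 2 * w * H1)) = 4 * ((k:ℝ)^3 * w^2 * H1) := by ring
      rw [e]
      linarith
    calc _ ≤ Real.exp P * Real.exp (-(49 * (k:ℝ) ^ 4 * w ^ 2 * H1 * H2)) := by gcongr
      _ = _ := by rw [← Real.exp_add]; congr 1; rw [hP]; ring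
  · rw [hT]
    set τ : ℝ := 10 + 4 * k + 2 * w + H1 + H2 with hτ
    have le_exp : ∀ x : ℝ, x ≤ Real.exp x := fun x => by linarith [Real.add_one_le_exp x]
    have hTP : ((8 * k ^ 4 * w ^ 2 * H1 * H2 : ℕ) : ℝ) = 8 * P := by rw [hP]; push_cast; ring
    have hP1 : 1 ≤ P := by linarith
    have hT1 : 8 * P + 1 ≤ Real.exp τ := by
      have : 8 * P + 1 ≤ 10 * (k * k * k * k * (w * w) * H1 * H2) := by
        have : (k * k * k * k * (w * w) * H1 * H2 : ℝ) = P := by rw [hP]; ring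
        rw [this]; linarith
      refine this.trans ?_
      have e : τ = 10 + ((k + k + k + k + (w + w)) + H1 + H2) := by rw [hτ]; ring
      rw [e]
      simp only [Real.exp_add]
      gcongr <;> exact le_exp _
    rw [hTP]
    have hpow : (Real.exp 6) ^ (8 * k ^ 4 * w ^ 2 * H1 * H2 - 1) = Real.exp (6 * (8 * P - 1)) := by
      rw [← Real.exp_nat_mul, Nat.cast_sub, hTP]
      · congr 1; push_cast; ring
      · have : 0 < 8 * k ^ 4 * w ^ 2 * H1 * H2 := by positivity
        omega
    rw [hpow]
    set κ := 8 * k ^ 3 * w * H1 * H2 with hκ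
    have hκR : (κ:ℝ) = 8 * k ^ 3 * w * H1 * H2 := by rw [hκ]; push_cast; ring
    set Y1 : ℝ := ((k * w : ℕ):ℝ) * (Real.exp 6 * ((2 * (k:ℝ) ^ 2 * w * H1 + 2) * H2)) with hY1
    set Y2 : ℝ := ((k * w : ℕ):ℝ) * ((((k * w : ℕ):ℝ) + ((4 * k ^ 2 * w * H2 : ℕ):ℝ)) * H1 + ((2 * k ^ 2 * w * H1 : ℕ):ℝ) * H2) with hY2
    have hX0 : 0 ≤ X := by linarith
    have hXk : X ^ κ ≤ Real.exp (κ * (0.75 * w)) := by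
      rw [Real.exp_nat_mul]; exact pow_le_pow_left₀ hX0 hXe _
    have hXk2 : (Real.exp 6 * X) ^ κ ≤ Real.exp (κ * (6 + 0.75 * w)) := by
      rw [Real.exp_nat_mul, Real.exp_add]
      apply pow_le_pow_left₀ (by positivity)
      gcongr
    have hBig : (8 * P + 1) * (8 * P) * (2 * ((Real.exp 6 * X) ^ κ * Real.exp Y1)) * (8 * P * (X ^ κ * Real.exp Y2)) ^ k
        ≤ Real.exp (τ + τ + (2 + (κ * (6 + 0.75 * w) + Y1)) + k * (τ + (κ * (0.75 * w) + Y2))) := by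
      rw [Real.exp_add, Real.exp_nat_mul _ k]
      simp only [Real.exp_add]
      have : 8 * P ≤ Real.exp τ := by linarith
      have h2e := le_exp 2
      gcongr
    have hlin : τ + τ + (2 + (κ * (6 + 0.75 * w) + Y1)) + k * (τ + (κ * (0.75 * w) + Y2)) < 3 * (8 * P - 1) := by
      have g1 : Y1 ≤ 404 * (2 * ((k:ℝ) ^ 3 * w ^ 2 * H1 * H2) + 2 * ((k:ℝ) ^ 3 * w ^ 2 * H1 * H2)) := by
        rw [hY1]; push_cast
        calc (k:ℝ) * w * (Real.exp 6 * ((2 * (k:ℝ) ^ 2 * w * H1 + 2) * H2)) ≤ (k:ℝ) * w * (404 * ((2 * (k:ℝ) ^ 2 * w * H1 + 2) * H2)) := by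
              gcongr; exact exp_six_le
          _ = 404 * (2 * ((k:ℝ) ^ 3 * w ^ 2 * H1 * H2) + 2 * (k * w * H2)) := by ring
          _ ≤ 404 * (2 * ((k:ℝ) ^ 3 * w ^ 2 * H1 * H2) + 2 * ((k:ℝ) * w * H2 * (k ^ 2 * w * H1))) := by
              have hm : (k:ℝ) * w * H2 ≤ (k:ℝ) * w * H2 * (k ^ 2 * w * H1) := by
               apply mono _ _ (by positivity)
               have : (1:ℝ) * 1 * 1 ≤ k ^ 2 * w * H1 := by
                gcongr; exact one_le_pow₀ k1
               linarith
              linarith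
          _ = _ := by ring
      have g2 : k * Y2 = 6 * P + (k:ℝ) ^ 4 * w ^ 2 * H1 / k := by
        rw [hY2, hP]; push_cast; field_simp; ring
      have g3 : (k:ℝ) ^ 4 * w ^ 2 * H1 / k ≤ (k:ℝ) ^ 3 * w ^ 2 * H1 * H2 := by
        have : (k:ℝ) ^ 4 * w ^ 2 * H1 / k = (k:ℝ) ^ 3 * w ^ 2 * H1 := by field_simp
        rw [this]; exact b3
      have g4 : k * (κ * (0.75 * (w:ℝ))) = 6 * P := by rw [hκR, hP]; ring
      have g5 : κ * (6 + 0.75 * (w:ℝ)) ≤ 8 * ((k:ℝ) ^ 3 * w ^ 2 * H1 * H2) := by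
        rw [hκR]
        calc (8 * k ^ 3 * w * H1 * H2 : ℝ) * (6 + 0.75 * (w:ℝ)) ≤ (8 * k ^ 3 * w * H1 * H2 : ℝ) * w := by gcongr; linarith
          _ = _ := by ring
      have g6 : (k:ℝ) * τ ≤ 20 * ((k:ℝ) ^ 3 * w ^ 2 * H1 * H2) := by
        have t1 : τ ≤ 20 * (k * w * H1 * H2) := by
          rw [hτ]
          have q1 : (1:ℝ) ≤ k * w * H1 * H2 := by
            have : (1:ℝ) * 1 * 1 * 1 ≤ k * w * H1 * H2 := by gcongr
            linarith
          have q2 : (k:ℝ) ≤ k * w * H1 * H2 := by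
            have : (k:ℝ) * 1 * 1 * 1 ≤ k * w * H1 * H2 := by gcongr
            linarith
          have q3 : (w:ℝ) ≤ k * w * H1 * H2 := by
            have : (1:ℝ) * w * 1 * 1 ≤ k * w * H1 * H2 := by gcongr
            linarith
          have q4 : (H1:ℝ) ≤ k * w * H1 * H2 := by
            have : (1:ℝ) * 1 * H1 * 1 ≤ k * w * H1 * H2 := by gcongr
            linarith
          have q5 : (H2:ℝ) ≤ k * w * H1 * H2 := by
            have : (1:ℝ) * 1 * 1 * H2 ≤ k * w * H1 * H2 := by gcongr
            linarith
          linarith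
        calc (k:ℝ) * τ ≤ k * (20 * (k * w * H1 * H2)) := by gcongr
          _ ≤ k * (20 * (k * w * H1 * H2)) * (k * w) := mono _ _ (by positivity) hkw1
          _ = _ := by ring
      have g7 : τ ≤ k * τ := le_mul_of_one_le_left (by positivity) k1
      have e : k * (τ + (κ * (0.75 * (w:ℝ)) + Y2)) = k * τ + 6 * P + k * Y2 := by rw [← g4]; ring
      rw [e, g2]
      linarith only [g1, g3, g5, g6, g7, b1, b4]
    calc _ ≤ (Real.exp (τ + τ + (2 + (κ * (6 + 0.75 * w) + Y1)) + k * (τ + (κ * (0.75 * w) + Y2)))) ^ 2 := by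
          apply pow_le_pow_left₀ (by positivity) hBig
      _ < _ := by
          rw [← Real.exp_nat_mul]
          apply Real.exp_lt_exp.2
          push_cast
          linarith

theorem gL_lt (k m : ℕ) (h : m < k - 2) : genLucas k m = 0 := by
  rw [genLucas]; simp [h]

theorem gL_a (k : ℕ) : genLucas k (k - 2) = 2 := by
  rw [genLucas]; simp

theorem gL_b (k : ℕ) (hk : 2 ≤ k) : genLucas k (k - 1) = 1 := by
  rw [genLucas, dif_neg (by omega), dif_neg (by omega), dif_pos rfl]

theorem gL_ge (k m : ℕ) (hk : 2 ≤ k) : genLucas k (m + k) = ∑ i ∈ Finset.range k, genLucas k (m + k - 1 - i) := by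
  rw [genLucas, dif_neg (by omega), dif_neg (by omega), dif_neg (by omega)]

theorem gL_rec (k m : ℕ) (hk : 2 ≤ k) : genLucas k (m + k + 1) = 2 * genLucas k (m + k) - genLucas k m := by
  obtain ⟨j, rfl⟩ : ∃ j, k = j + 1 := ⟨k - 1, by omega⟩
  have h1 := gL_ge (j + 1) (m + 1) hk
  have h2 := gL_ge (j + 1) m hk
  rw [Finset.sum_range_succ'] at h1
  rw [Finset.sum_range_succ] at h2
  have e : ∀ i ∈ Finset.range j, genLucas (j+1) (m + 1 + (j + 1) - 1 - (i + 1)) = genLucas (j+1) (m + (j + 1) - 1 - i) := by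
    intro i hi; congr 1; omega
  rw [Finset.sum_congr rfl e] at h1
  have e1 : m + 1 + (j + 1) - 1 - 0 = m + (j + 1) := by omega
  have e2 : m + (j + 1) - 1 - j = m := by omega
  have e3 : m + 1 + (j + 1) = m + (j + 1) + 1 := by omega
  rw [e1, e3] at h1
  rw [e2] at h2
  linarith

theorem gL_k (k : ℕ) (hk : 2 ≤ k) : genLucas k k = 3 := by
  have h := gL_ge k 0 hk
  obtain ⟨j, rfl⟩ : ∃ j, k = j + 2 := ⟨k - 2, by omega⟩
  rw [zero_add, Finset.sum_range_succ', Finset.sum_range_succ'] at h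
  have h0 : ∑ i ∈ Finset.range j, genLucas (j+2) (j + 2 - 1 - (i + 1 + 1)) = 0 := by
    apply Finset.sum_eq_zero
    intro i hi
    rw [Finset.mem_range] at hi
    apply gL_lt; omega
  have ha := gL_a (j + 2)
  have hb := gL_b (j + 2) hk
  rw [h0] at h
  have e1 : j + 2 - 1 - (0 + 1) = j + 2 - 2 := by omega
  have e2 : j + 2 - 1 - 0 = j + 2 - 1 := by omega
  rw [e1, e2, ha, hb] at h
  rw [h]; norm_num

theorem lL_zero (k : ℕ) (hk : 2 ≤ k) : lucasL k 0 = 2 := by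
  have := gL_a k; rw [lucasL]; simpa using this

theorem lL_one (k : ℕ) (hk : 2 ≤ k) : lucasL k 1 = 1 := by
  have := gL_b k hk; rw [lucasL]; convert this using 2; omega

theorem lL_two (k : ℕ) (hk : 2 ≤ k) : lucasL k 2 = 3 := by
  have := gL_k k hk; rw [lucasL]; convert this using 2; omega

theorem lL_rec (k n : ℕ) (hk : 2 ≤ k) : lucasL k (n + k + 1) = 2 * lucasL k (n + k) - lucasL k n := by
  have := gL_rec k (n + k - 2) hk
  simp only [lucasL]
  have e1 : n + k + 1 + k - 2 = n + k - 2 + k + 1 := by omega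
  have e2 : n + k + k - 2 = n + k - 2 + k := by omega
  rw [e1, e2, this]

theorem lL_dbl (k n : ℕ) (hk : 2 ≤ k) (h2 : 2 ≤ n) (hn : n < k) : lucasL k (n + 1) = 2 * lucasL k n := by
  have := gL_rec k (n - 2) hk
  rw [gL_lt k (n - 2) (by omega)] at this
  simp only [lucasL]
  have e1 : n + 1 + k - 2 = n - 2 + k + 1 := by omega
  have e2 : n + k - 2 = n - 2 + k := by omega
  rw [e1, e2, this]; ring

theorem pow_158 (k : ℕ) (hk : 4 ≤ k) : 2 * (k:ℝ) ≤ (15/8:ℝ) ^ k := by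
  induction k, hk using Nat.le_induction with
  | base => norm_num
  | succ n hn ih =>
    rw [pow_succ]; push_cast
    have : (4:ℝ) ≤ n := by exact_mod_cast hn
    nlinarith

theorem exists_alpha (k : ℕ) (hk : 471 ≤ k) : ∃ α : ℝ, 15/8 < α ∧ α < 2 ∧ α ^ k * (2 - α) = 1 := by
  have hc : ContinuousOn (fun x : ℝ => x ^ k * (2 - x)) (Set.Icc (15/8) 2) := by fun_prop
  have h := intermediate_value_Ioo' (by norm_num) hc
  have h1 := pow_158 k (by omega)
  have h2 : (471:ℝ) ≤ k := by exact_mod_cast hk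
  obtain ⟨x, hx, hx2⟩ := h (show (1:ℝ) ∈ _ by
    constructor
    · norm_num
    · change (1:ℝ) < (15/8) ^ k * (2 - 15/8)
      nlinarith)
  exact ⟨x, hx.1, hx.2, hx2⟩

theorem Q_lemma (k : ℕ) (hk : 471 ≤ k) (α : ℝ) (hα : α ^ k * (2 - α) = 1) (m : ℕ) :
    ∑ j ∈ Finset.range k, (2 - α) * α ^ j * (genLucas k (m + k - 1 - j) : ℝ) =
      genLucas k (m + k) - (2 * α - 1) * (α - 1) * α ^ m := by
  obtain ⟨j, rfl⟩ : ∃ j, k = j + 2 := ⟨k - 2, by omega⟩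
  induction m with
  | zero =>
    rw [zero_add, Finset.sum_range_succ', Finset.sum_range_succ']
    have h0 : ∑ i ∈ Finset.range j, (2 - α) * α ^ (i + 1 + 1) * (genLucas (j+2) (j + 2 - 1 - (i + 1 + 1)) : ℝ) = 0 := by
      apply Finset.sum_eq_zero
      intro i hi
      rw [Finset.mem_range] at hi
      rw [gL_lt _ _ (by omega)]; simp
    have ha := gL_a (j + 2)
    have hb := gL_b (j + 2) (by omega)
    have hc := gL_k (j + 2) (by omega)
    rw [h0]
    have e1 : j + 2 - 1 - (0 + 1) = j + 2 - 2 := by omega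
    have e2 : j + 2 - 1 - 0 = j + 2 - 1 := by omega
    rw [e1, e2, ha, hb, hc]
    push_cast
    ring
  | succ m ih =>
    have hr := gL_rec (j + 2) m (by omega)
    rw [show j + 2 = (j + 1) + 1 by omega] at *
    rw [Finset.sum_range_succ'] 
    rw [Finset.sum_range_succ] at ih
    have e : ∀ i ∈ Finset.range (j+1), (2 - α) * α ^ (i + 1) * (genLucas (j+1+1) (m + 1 + (j + 1 + 1) - 1 - (i + 1)) : ℝ) =
        α * ((2 - α) * α ^ i * (genLucas (j+1+1) (m + (j + 1 + 1) - 1 - i) : ℝ)) := by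
      intro i hi
      rw [show m + 1 + (j + 1 + 1) - 1 - (i + 1) = m + (j + 1 + 1) - 1 - i by omega]
      ring
    rw [Finset.sum_congr rfl e, ← Finset.mul_sum]
    rw [show m + 1 + (j + 1 + 1) - 1 - 0 = m + (j + 1 + 1) by omega, show m + 1 + (j + 1 + 1) = m + (j + 1 + 1) + 1 by omega, hr]
    rw [show m + (j + 1 + 1) - 1 - (j + 1) = m by omega] at ih
    push_cast
    rw [pow_succ] at hα
    have ih' : ∑ x ∈ Finset.range (j + 1), (2 - α) * α ^ x * (genLucas (j+1+1) (m + (j + 1 + 1) - 1 - x) : ℝ) =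
      (genLucas (j+1+1) (m + (j+1+1)) : ℝ) - (2 * α - 1) * (α - 1) * α ^ m - (2 - α) * α ^ (j + 1) * genLucas (j+1+1) m := by linarith
    rw [ih']
    linear_combination (-(genLucas (j+1+1) m : ℝ)) * hα

theorem E_lemma (k : ℕ) (hk : 471 ≤ k) (α : ℝ) (h1 : 15/8 < α) (h2 : α < 2) (hα : α ^ k * (2 - α) = 1) (m : ℕ) :
    |((k + 1) * α - 2 * k) * (genLucas k m : ℝ) - (2 * α - 1) * (α - 1) * (2 - α) * α ^ (m + 1)| ≤ 4 := by
  set B : ℝ := (k + 1) * α - 2 * k with hB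
  set C : ℝ := (2 * α - 1) * (α - 1) with hC
  have hαk := pow_158 k (by omega)
  have hkR : (471:ℝ) ≤ k := by exact_mod_cast hk
  have hpk : 2 * (k:ℝ) ≤ α ^ k := hαk.trans (pow_le_pow_left₀ (by norm_num) h1.le k)
  have hk2 : k * (2 - α) ≤ 1/2 := by nlinarith
  have hB1 : 1 ≤ B := by rw [hB]; linarith
  have hB2 : B ≤ 2 := by rw [hB]; nlinarith
  have hC0 : 0 ≤ C := by rw [hC]; nlinarith
  have hC3 : C ≤ 3 := by rw [hC]; nlinarith
  have hα0 : 0 < α := by linarith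
  have hα1 : 1 ≤ α := by linarith
  have h2α : 0 < 2 - α := by linarith
  have hsum : ∑ j ∈ Finset.range k, (2 - α) * α ^ j = 1 := by
    rw [← Finset.mul_sum, geom_sum_eq (by linarith)]
    have : α - 1 ≠ 0 := by linarith
    field_simp
    linarith
  induction m using Nat.strong_induction_on with
  | _ m ih =>
    by_cases hm : m < k
    · have hpos : 0 ≤ C * (2 - α) * α ^ (m + 1) := by positivity
      have hle : C * (2 - α) * α ^ (m + 1) ≤ 3 := by
        have : α ^ (m + 1) ≤ α ^ k := pow_le_pow_right₀ hα1 hm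
        calc C * (2 - α) * α ^ (m + 1) ≤ C * (2 - α) * α ^ k := by gcongr
          _ = C * (α ^ k * (2 - α)) := by ring
          _ ≤ 3 := by rw [hα]; linarith
      have hg : (0:ℝ) ≤ genLucas k m ∧ (genLucas k m : ℝ) ≤ 2 := by
        rcases lt_or_ge m (k - 2) with h | h
        · rw [gL_lt k m h]; norm_num
        · rcases (by omega : m = k - 2 ∨ m = k - 1) with h | h
          · rw [h, gL_a]; norm_num
          · rw [h, gL_b k (by omega)]; norm_num
      rw [abs_le]
      constructor <;> nlinarith [hg.1, hg.2]
    · obtain ⟨m, rfl⟩ : ∃ m', m = m' + k := ⟨m - k, by omega⟩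
      have hq := Q_lemma k hk α hα m
      have hrec : B * (genLucas k (m + k) : ℝ) - C * (2 - α) * α ^ (m + k + 1) =
          ∑ j ∈ Finset.range k, (2 - α) * α ^ j * (B * (genLucas k (m + k - 1 - j) : ℝ) - C * (2 - α) * α ^ (m + k - 1 - j + 1)) := by
        have e1 : ∀ j ∈ Finset.range k, (2 - α) * α ^ j * (B * (genLucas k (m + k - 1 - j) : ℝ) - C * (2 - α) * α ^ (m + k - 1 - j + 1)) =
            B * ((2 - α) * α ^ j * (genLucas k (m + k - 1 - j) : ℝ)) - C * (2 - α) * (2 - α) * α ^ (m + k) := by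
          intro j hj
          rw [Finset.mem_range] at hj
          have : α ^ (m + k) = α ^ j * α ^ (m + k - 1 - j + 1) := by rw [← pow_add]; congr 1; omega
          rw [this]; ring
        rw [Finset.sum_congr rfl e1, Finset.sum_sub_distrib, ← Finset.mul_sum, hq]
        simp only [Finset.sum_const, Finset.card_range, nsmul_eq_mul]
        rw [pow_succ, pow_add]
        have : C * B * α ^ m = C * B * α ^ m * (α ^ k * (2 - α)) := by rw [hα, mul_one]
        rw [hB] at *
        linear_combination this
      rw [hrec]
      refine (Finset.abs_sum_le_sum_abs _ _).trans ?_
      calc ∑ j ∈ Finset.range k, |(2 - α) * α ^ j * (B * (genLucas k (m + k - 1 - j) : ℝ) - C * (2 - α) * α ^ (m + k - 1 - j + 1))|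
          ≤ ∑ j ∈ Finset.range k, ((2 - α) * α ^ j) * 4 := by
            apply Finset.sum_le_sum
            intro j hj
            rw [Finset.mem_range] at hj
            rw [abs_mul, abs_of_pos (by positivity : 0 < (2 - α) * α ^ j)]
            gcongr
            exact ih _ (by omega)
        _ = 4 := by rw [← Finset.sum_mul, hsum, one_mul]

theorem lucas_alpha (k : ℕ) (hk : 471 ≤ k) (α : ℝ) (h1 : 15/8 < α) (h2 : α < 2) (hα : α ^ k * (2 - α) = 1) (n : ℕ) (hn : 1 ≤ n) :
    |((k + 1) * α - 2 * k) * (lucasL k n : ℝ) - (2 * α - 1) * (α - 1) * α ^ (n - 1)| ≤ 4 := by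
  have h := E_lemma k hk α h1 h2 hα (n + k - 2)
  rw [lucasL]
  convert h using 3
  rw [show n + k - 2 + 1 = (n - 1) + k by omega, pow_add]
  have : α ^ (n-1) = α ^ (n-1) * (α ^ k * (2 - α)) := by rw [hα, mul_one]
  linear_combination (2 * α - 1) * (α - 1) * this

open IntermediateField in
theorem alpha_field (k : ℕ) (hk : 471 ≤ k) (α : ℝ) (h1 : 15/8 < α) (hα : α ^ k * (2 - α) = 1) :
    ∃ (K : Type) (_ : Field K) (_ : NumberField K) (φ : K →+* ℝ) (g : K),
      φ g = α ∧ Module.finrank ℚ K ≤ k ∧ IsIntegral ℤ g ∧ ∀ σ : K →+* ℂ, ‖σ g‖ ≤ 2 := by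
  have hs : α ^ k = ∑ i ∈ Finset.range k, α ^ i := by
    rw [geom_sum_eq (by linarith), eq_div_iff (by linarith)]
    linarith
  have mon : ∀ (R : Type) [CommRing R] [Nontrivial R], ((Polynomial.X : Polynomial R) ^ k - ∑ i ∈ Finset.range k, Polynomial.X ^ i).Monic := by
    intro R _ _
    apply (Polynomial.monic_X_pow k).sub_of_left
    · rw [Polynomial.degree_X_pow]
      apply lt_of_le_of_lt (Polynomial.degree_sum_le _ _)
      rw [Finset.sup_lt_iff (by exact WithBot.bot_lt_coe k)]
      intro i hi
      rw [Polynomial.degree_X_pow]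
      exact_mod_cast Finset.mem_range.1 hi
  have hintZ : IsIntegral ℤ α := by
    refine ⟨_, mon ℤ, ?_⟩
    simp [Polynomial.eval₂_finsetSum, hs]
  have hint : IsIntegral ℚ α := hintZ.tower_top
  have : FiniteDimensional ℚ ℚ⟮α⟯ := adjoin.finiteDimensional hint
  refine ⟨ℚ⟮α⟯, inferInstance, ⟨⟩, algebraMap ℚ⟮α⟯ ℝ, AdjoinSimple.gen ℚ α, AdjoinSimple.algebraMap_gen ℚ α, ?_, ?_, ?_⟩
  · rw [adjoin.finrank hint]
    have hd := minpoly.min ℚ α (mon ℚ) (by simp [hs])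
    have hd2 := Polynomial.natDegree_le_natDegree hd
    refine hd2.trans ?_
    apply Polynomial.natDegree_le_of_degree_le
    apply (Polynomial.degree_sub_le _ _).trans
    rw [max_le_iff]
    constructor
    · rw [Polynomial.degree_X_pow]
    · apply (Polynomial.degree_sum_le _ _).trans
      apply Finset.sup_le
      intro i hi
      rw [Polynomial.degree_X_pow]
      exact_mod_cast (Finset.mem_range.1 hi).le
  · have : IsIntegral ℤ (algebraMap ℚ⟮α⟯ ℝ (AdjoinSimple.gen ℚ α)) := by
      rw [AdjoinSimple.algebraMap_gen]; exact hintZ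
    exact (isIntegral_algebraMap_iff (algebraMap ℚ⟮α⟯ ℝ).injective).1 this
  · intro σ
    have hs' : (AdjoinSimple.gen ℚ α) ^ k = ∑ i ∈ Finset.range k, (AdjoinSimple.gen ℚ α) ^ i := by
      apply (algebraMap ℚ⟮α⟯ ℝ).injective
      simp only [map_pow, map_sum, AdjoinSimple.algebraMap_gen, hs]
    set z := σ (AdjoinSimple.gen ℚ α) with hz
    have hzs : z ^ k = ∑ i ∈ Finset.range k, z ^ i := by
      rw [hz, ← map_pow, hs', map_sum]; simp only [map_pow]
    by_contra hcon
    push Not at hcon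
    have h3 : ‖z‖ ^ k ≤ ∑ i ∈ Finset.range k, ‖z‖ ^ i := by
      rw [← norm_pow, hzs]
      refine (norm_sum_le _ _).trans (le_of_eq ?_)
      simp only [norm_pow]
    rw [geom_sum_eq (by linarith), le_div_iff₀ (by linarith)] at h3
    have : 0 < ‖z‖ ^ k := by positivity
    nlinarith

theorem alpha_pow_ne (k : ℕ) (hk : 471 ≤ k) (α : ℝ) (h1 : 15/8 < α) (hα : α ^ k * (2 - α) = 1) (p q : ℕ) (hp : 1 ≤ p) :
    α ^ p ≠ 10 ^ q := by
  intro h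
  have hs : α ^ k = ∑ i ∈ Finset.range k, α ^ i := by
    rw [geom_sum_eq (by linarith), eq_div_iff (by linarith)]
    linarith
  have hintZ : IsIntegral ℤ α := by
    refine ⟨Polynomial.X ^ (k + 1) - Polynomial.C 2 * Polynomial.X ^ k + 1, ?_, ?_⟩
    · monicity!
    · simp; rw [pow_succ]; linarith
  have hinv : α⁻¹ = α ^ (k - 1) * (2 - α) := by
    have h0 : α ≠ 0 := by linarith
    rw [inv_eq_iff_eq_inv, eq_comm, inv_eq_iff_eq_inv, eq_comm] 
    field_simp
    rw [← hα, ← pow_succ']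
    congr 2; omega
  have hi2 : IsIntegral ℤ (α⁻¹) := by
    rw [hinv]
    refine (hintZ.pow _).mul (IsIntegral.sub ?_ hintZ)
    exact_mod_cast isIntegral_algebraMap (R := ℤ) (A := ℝ) (x := 2)
  have hi3 : IsIntegral ℤ ((((10:ℚ)^q)⁻¹ : ℚ) : ℝ) := by
    have := hi2.pow p
    rw [inv_pow, h] at this
    push_cast
    exact this
  have hi4 : IsIntegral ℤ (((10:ℚ)^q)⁻¹ : ℚ) := (isIntegral_algebraMap_iff (algebraMap ℚ ℝ).injective).1 hi3
  obtain ⟨z, hz⟩ := IsIntegrallyClosed.isIntegral_iff.1 hi4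
  have hq : q ≠ 0 := by
    rintro rfl
    rw [pow_zero] at h
    have := one_lt_pow₀ (by linarith : (1:ℝ) < α) (by omega : p ≠ 0)
    linarith
  have h5 : (z : ℚ) * 10 ^ q = 1 := by
    have hz' : (z:ℚ) = ((10:ℚ)^q)⁻¹ := hz
    rw [hz']; field_simp
  have h6 : z * 10 ^ q = 1 := by exact_mod_cast h5
  have h7 : (10:ℤ) ∣ 1 := by rw [← h6]; exact Dvd.dvd.mul_left (dvd_pow_self _ hq) _
  omega

theorem dirichlet_split (d ν Q : ℕ) (hQ : 1 ≤ Q) (hν : 1 ≤ ν) (hd : 3 * d ≤ ν) :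
    ∃ p q : ℕ, 1 ≤ p ∧ p ≤ Q ∧ (q : ℝ) ≤ p / 3 + 1 / 2 ∧
      |(d : ℝ) - (ν / p : ℕ) * q| ≤ ν / (p * Q) + p := by
  obtain ⟨q, p, hp0, hpQ, hpq⟩ := Real.exists_int_int_abs_mul_sub_le ((d:ℝ) / ν) (n := Q) (by omega)
  have hνR : (1:ℝ) ≤ ν := by exact_mod_cast hν
  have hQR : (1:ℝ) ≤ Q := by exact_mod_cast hQ
  have hdR : 3 * (d:ℝ) ≤ ν := by exact_mod_cast hd
  lift p to ℕ using hp0.le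
  have hpR : (1:ℝ) ≤ p := by exact_mod_cast hp0
  have hξ0 : 0 ≤ (d:ℝ) / ν := by positivity
  have hξ : (d:ℝ) / ν ≤ 1 / 3 := by rw [div_le_iff₀ (by linarith)]; linarith
  have hhalf : (1:ℝ) / (Q + 1) ≤ 1 / 2 := by
    apply one_div_le_one_div_of_le <;> linarith
  push_cast at hpq
  have hab := abs_le.1 hpq
  have hq0 : 0 ≤ q := by
    have : (-1:ℝ) < q := by nlinarith [hab.2, mul_nonneg hξ0 (by linarith : (0:ℝ) ≤ p)]
    have : (-1:ℤ) < q := by exact_mod_cast this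
    omega
  lift q to ℕ using hq0
  push_cast at hpq hab
  have hq3 : (q:ℝ) ≤ p / 3 + 1 / 2 := by
    have : (p:ℝ) * (d / ν) ≤ p * (1 / 3) := by gcongr
    have h1 := hab.1
    have h2 : (d:ℝ) / ν * p = p * (d / ν) := by ring
    linarith
  refine ⟨p, q, by exact_mod_cast hp0, by exact_mod_cast hpQ, hq3, ?_⟩
  have hdiv : (ν:ℝ) = p * (ν / p : ℕ) + (ν % p : ℕ) := by exact_mod_cast (Nat.div_add_mod ν p).symm
  have hr : ((ν % p : ℕ) : ℝ) ≤ p - 1 := by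
    have : ν % p + 1 ≤ p := Nat.mod_lt _ (by exact_mod_cast hp0)
    have : ((ν % p : ℕ) : ℝ) + 1 ≤ p := by exact_mod_cast this
    linarith
  set N : ℝ := ((ν / p : ℕ) : ℝ) with hN
  set r : ℝ := ((ν % p : ℕ) : ℝ) with hrr
  have hr0 : 0 ≤ r := by positivity
  have e : (d:ℝ) - N * q = (ν / p) * ((d:ℝ) / ν * p - q) + r * q / p := by
    have hν0 : (ν:ℝ) ≠ 0 := by positivity
    have : N = (ν - r) / p := by rw [hdiv]; field_simp; ring
    rw [this]; field_simp; ring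
  rw [e]
  refine (abs_add_le _ _).trans ?_
  apply add_le_add
  · rw [abs_mul, abs_of_nonneg (by positivity)]
    calc (ν:ℝ) / p * |(d:ℝ) / ν * p - q| ≤ ν / p * (1 / (Q + 1)) := by
          gcongr
          rw [mul_comm ((d:ℝ) / ν)]; exact hpq
      _ ≤ ν / p * (1 / Q) := by gcongr; linarith
      _ = _ := by field_simp
  · rw [abs_of_nonneg (by positivity), div_le_iff₀ (by linarith)]
    rcases eq_or_lt_of_le hpR with h | h
    · rw [← h] at hr
      have : r = 0 := by linarith
      rw [this]; nlinarith
    · have : (2:ℝ) ≤ p := by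
        have : 1 < p := by exact_mod_cast h
        exact_mod_cast this
      have : (q:ℝ) ≤ p := by linarith
      have : r ≤ p := by linarith
      gcongr

theorem two_pow_le_exp (n : ℕ) : (2:ℝ) ^ n ≤ Real.exp n := by
  have h : (2:ℝ) ≤ Real.exp 1 := by have := Real.add_one_le_exp 1; linarith
  calc (2:ℝ) ^ n ≤ Real.exp 1 ^ n := pow_le_pow_left₀ (by norm_num) h n
    _ = _ := by rw [← Real.exp_nat_mul, mul_one]

theorem log_ten_le : Real.log 10 ≤ 2.32 := by
  have h2 := Real.log_two_lt_d9
  have : Real.log 1000 ≤ Real.log 1024 := Real.log_le_log (by norm_num) (by norm_num)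
  rw [show (1000:ℝ) = 10 ^ 3 by norm_num, show (1024:ℝ) = 2 ^ 10 by norm_num, Real.log_pow, Real.log_pow] at this
  push_cast at this
  linarith

theorem ten_pow_le_exp (n : ℕ) : (10:ℝ) ^ n ≤ Real.exp (2.32 * n) := by
  have h := log_ten_le
  calc (10:ℝ) ^ n = Real.exp (Real.log 10 * n) := by
        rw [mul_comm, Real.exp_nat_mul, Real.exp_log (by norm_num)]
    _ ≤ _ := Real.exp_le_exp.2 (by gcongr)

theorem BC_bounds (k : ℕ) (hk : 471 ≤ k) (α : ℝ) (h1 : 15/8 < α) (h2 : α < 2) (hα : α ^ k * (2 - α) = 1) :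
    (1 ≤ (k + 1) * α - 2 * k ∧ (k + 1) * α - 2 * k ≤ 2) ∧ 1 ≤ (2 * α - 1) * (α - 1) ∧ (2 * α - 1) * (α - 1) ≤ 3 := by
  have hpk : 2 * (k:ℝ) ≤ α ^ k := (pow_158 k (by omega)).trans (pow_le_pow_left₀ (by norm_num) h1.le k)
  have h0 : 0 < 2 - α := by linarith only [h2]
  have hk2 : 2 * (k * (2 - α)) ≤ 1 := by
    rw [← hα, ← mul_assoc]; exact mul_le_mul_of_nonneg_right hpk h0.le
  have hk0 : 0 ≤ k * (2 - α) := mul_nonneg (Nat.cast_nonneg k) h0.le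
  have e : (k + 1) * α - 2 * k = α - k * (2 - α) := by ring
  refine ⟨⟨?_, ?_⟩, ?_, ?_⟩
  · rw [e]; linarith only [hk2, h1]
  · rw [e]; linarith only [hk0, h2]
  · nlinarith only [h1, h2]
  · nlinarith only [h1, h2]

theorem lin_exp_w (w : ℝ) (hw : 968 ≤ w) : 802 * w ≤ Real.exp w := by
  have := Real.pow_div_factorial_le_exp w (by linarith) 3
  refine le_trans ?_ this
  rw [le_div_iff₀ (by positivity)]
  have h2 : (968:ℝ)^2 ≤ w^2 := by gcongr
  norm_num [Nat.factorial] at h2 ⊢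
  calc 802 * w * 6 ≤ w * 937024 := by linarith only [hw]
    _ ≤ w * w ^ 2 := mul_le_mul_of_nonneg_left h2 (by linarith only [hw])
    _ = w ^ 3 := by ring

set_option maxHeartbeats 1600000 in
theorem three_log (k : ℕ) (hk : 471 ≤ k) (α : ℝ) (h1 : 15/8 < α) (h2 : α < 2) (hα : α ^ k * (2 - α) = 1)
    (M d ν Q w h : ℕ) (hM : 1 ≤ M) (hMh : (M:ℝ) ≤ Real.exp h) (hw : 968 ≤ w) (hkw : k ≤ 200 * w)
    (hν : 1 ≤ ν) (hνw : ν ≤ 2 ^ w) (hd : 3 * d ≤ ν)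
    (hQ1 : 24 * k ^ 2 * w ≤ Q) (hQ2 : (4 * k ^ 2 * w * (h + w + 13 + 6 * Q) + 1) * (2 * Q) ≤ ν)
    (Λ : ℝ) (hΛ1 : |Λ| ≤ 1)
    (hΛ : (M:ℝ) * ((k + 1) * α - 2 * k) * 10 ^ d = Real.exp Λ * (9 * ((2 * α - 1) * (α - 1)) * α ^ ν)) :
    Real.exp (-(49 * (k:ℝ) ^ 4 * w ^ 2 * (2 * Q * (h + w + 13 + 6 * Q) + 6 * (ν / Q)))) ≤ |Λ| := by
  have kR : (471:ℝ) ≤ k := by exact_mod_cast hk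
  have wR : (968:ℝ) ≤ w := by exact_mod_cast hw
  have kwR : (k:ℝ) ≤ 200 * w := by exact_mod_cast hkw
  have hk2w : 1 ≤ k ^ 2 * w := Nat.one_le_iff_ne_zero.2 (by positivity)
  have hQ0 : 1 ≤ Q := by linarith only [hQ1, hk2w]
  have QR : (1:ℝ) ≤ Q := by exact_mod_cast hQ0
  have νR : (1:ℝ) ≤ ν := by exact_mod_cast hν
  obtain ⟨p, q, hp1, hpQ, hq3, hr2⟩ := dirichlet_split d ν Q hQ0 hν hd
  obtain ⟨K, _, _, φ, g, hg, hfin, hgi, hgσ⟩ := alpha_field k hk α h1 hα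
  have pR : (1:ℝ) ≤ p := by exact_mod_cast hp1
  have pQR : (p:ℝ) ≤ Q := by exact_mod_cast hpQ
  set N := ν / p with hN
  set r1 := ν % p with hr1
  have hdiv : p * N + r1 = ν := Nat.div_add_mod ν p
  have hr1p : r1 ≤ p := (Nat.mod_lt _ hp1).le
  set s1 := d - N * q with hs1
  set s2 := N * q - d with hs2
  have hss : d + s2 = s1 + N * q := by omega
  set s := s1 + s2 with hs
  have hsR : (s:ℝ) ≤ ν / (p * Q) + p := by
    refine le_trans (le_of_eq ?_) hr2
    rcases le_total d (N * q) with hle | hle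
    · have e1 : s = N * q - d := by omega
      have : (d:ℝ) ≤ N * q := by exact_mod_cast hle
      rw [e1, abs_of_nonpos (by linarith only [this])]
      rw [Nat.cast_sub hle]; push_cast; ring
    · have e1 : s = d - N * q := by omega
      have : (N:ℝ) * q ≤ d := by exact_mod_cast hle
      rw [e1, abs_of_nonneg (by linarith only [this])]
      rw [Nat.cast_sub hle]; push_cast; ring
  have hα0 : 0 < α := by linarith
  set B : ℝ := (k + 1) * α - 2 * k with hB
  set C : ℝ := (2 * α - 1) * (α - 1) with hC
  obtain ⟨⟨hB1, hB2⟩, hC0, hC3⟩ := BC_bounds k hk α h1 h2 hα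
  rw [← hB] at hB1 hB2
  rw [← hC] at hC0 hC3
  set ell : ℝ := p * Real.log α - q * Real.log 10 with hell
  have hexpell : Real.exp ell * 10 ^ q = α ^ p := by
    rw [hell, Real.exp_sub, Real.exp_nat_mul, Real.exp_nat_mul, Real.exp_log hα0, Real.exp_log (by norm_num)]
    field_simp
  have hell0 : ell ≠ 0 := by
    intro h0
    rw [h0, Real.exp_zero, one_mul] at hexpell
    exact alpha_pow_ne k hk α h1 hα p q hp1 hexpell.symm
  have hvN : (M:ℝ) * B * 10 ^ s1 = Real.exp (Λ + N * ell) * (9 * C * α ^ r1 * 10 ^ s2) := by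
    have h10 : (0:ℝ) < 10 ^ (N * q) := by positivity
    apply mul_right_cancel₀ h10.ne'
    rw [Real.exp_add, Real.exp_nat_mul]
    calc (M:ℝ) * B * 10 ^ s1 * 10 ^ (N * q) = M * B * 10 ^ (s1 + N * q) := by rw [pow_add]; ring
      _ = (M * B * 10 ^ d) * 10 ^ s2 := by rw [← hss, pow_add]; ring
      _ = Real.exp Λ * (9 * C * α ^ (p * N + r1)) * 10 ^ s2 := by rw [hΛ, hdiv]
      _ = Real.exp Λ * (9 * C * ((α ^ p) ^ N * α ^ r1)) * 10 ^ s2 := by rw [pow_add, pow_mul]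
      _ = _ := by rw [← hexpell, mul_pow, ← pow_mul, mul_comm q N]; ring
  set H2 := h + w + 3 * s + p + 10 with hH2
  have hH2R : (H2:ℝ) = h + w + 3 * s + p + 10 := by rw [hH2]; push_cast; ring
  have hH2le : (H2:ℝ) ≤ h + w + 13 + 4 * Q + 3 * (ν / (p * Q)) := by
    rw [hH2R]; linarith only [hsR, pQR]
  have hs1s : (s1:ℝ) ≤ s := by exact_mod_cast (by omega : s1 ≤ s)
  have hs2s : (s2:ℝ) ≤ s := by exact_mod_cast (by omega : s2 ≤ s)
  have hs0 : (0:ℝ) ≤ s := by positivity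
  have r1R : (r1:ℝ) ≤ p := by exact_mod_cast hr1p
  have hpN : p * N ≤ ν := by omega
  have hNR : (ν:ℝ) / p - 1 ≤ N := by
    have : ν + 1 ≤ p * N + p := by
      have := Nat.mod_lt ν hp1
      omega
    have : (ν:ℝ) + 1 ≤ p * N + p := by exact_mod_cast this
    rw [sub_le_iff_le_add, div_le_iff₀ (by linarith)]
    linarith
  have key := two_log_param φ k hk hfin (g ^ p) ((10 ^ q : ℕ) : K) ((M : ℕ) * (((k + 1 : ℕ) : K) * g - ((2 * k : ℕ) : K)) * ((10 ^ s1 : ℕ) : K))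
    (9 * ((2 * g - 1) * (g - 1)) * g ^ r1 * ((10 ^ s2 : ℕ) : K)) (hgi.pow _) ?_ ?_ ?_ (2 * p) H2 (by omega) (by omega)
    ?_ ?_ ?_ ?_ ?_ ?_ N w ell Λ hell0 ?_ ?_ hw hkw ?_ ?_ ?_
  · refine le_trans (Real.exp_le_exp.2 ?_) key
    apply neg_le_neg
    rw [mul_assoc _ ((2 * p : ℕ):ℝ)]
    apply mul_le_mul_of_nonneg_left _ (by positivity)
    push_cast
    have e : 2 * (p:ℝ) * (3 * (ν / (p * Q))) = 6 * (ν / Q) := by field_simp; ring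
    calc 2 * (p:ℝ) * H2 ≤ 2 * p * (h + w + 13 + 4 * Q + 3 * (ν / (p * Q))) := by gcongr
      _ = 2 * p * (h + w + 13 + 4 * Q) + 6 * (ν / Q) := by rw [← e]; ring
      _ ≤ 2 * Q * (h + w + 13 + 6 * Q) + 6 * (ν / Q) := by gcongr; norm_num
  · exact isIntegral_algebraMap (R := ℤ) (A := K) (x := ((10 ^ q : ℕ) : ℤ)) |> fun h => by simpa using h
  · have i1 : ∀ x : ℕ, IsIntegral ℤ (x : K) := fun x => isIntegral_algebraMap (R := ℤ) (A := K) (x := (x : ℤ)) |> fun h => by simpa using h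
    exact ((i1 M).mul (((i1 _).mul hgi).sub (i1 _))).mul (i1 _)
  · have i1 : ∀ x : ℕ, IsIntegral ℤ (x : K) := fun x => isIntegral_algebraMap (R := ℤ) (A := K) (x := (x : ℤ)) |> fun h => by simpa using h
    have i9 : IsIntegral ℤ (9 : K) := by exact_mod_cast i1 9
    have i2 : IsIntegral ℤ (2 : K) := by exact_mod_cast i1 2
    exact ((i9.mul (((i2.mul hgi).sub isIntegral_one).mul (hgi.sub isIntegral_one))).mul (hgi.pow _)).mul (i1 _)
  · intro σ
    rw [map_pow, norm_pow]
    calc _ ≤ (2:ℝ) ^ p := pow_le_pow_left₀ (norm_nonneg _) (hgσ σ) _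
      _ ≤ Real.exp p := two_pow_le_exp p
      _ ≤ _ := Real.exp_le_exp.2 (by push_cast; linarith)
  · intro σ
    rw [map_natCast, Complex.norm_natCast]
    push_cast
    refine (ten_pow_le_exp q).trans (Real.exp_le_exp.2 ?_)
    linarith
  · intro σ
    simp only [map_mul, map_sub, map_natCast, norm_mul, Complex.norm_natCast]
    have b1 : ‖((k + 1 : ℕ) : ℂ) * σ g - ((2 * k : ℕ) : ℂ)‖ ≤ Real.exp w := by
      refine (norm_sub_le _ _).trans ?_
      rw [norm_mul, Complex.norm_natCast, Complex.norm_natCast]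
      have := hgσ σ
      have t1 : ((k + 1 : ℕ) : ℝ) * ‖σ g‖ ≤ (k + 1 : ℕ) * 2 := by gcongr
      have t2 : ((k + 1 : ℕ) : ℝ) * 2 + ((2 * k : ℕ):ℝ) ≤ 802 * w := by push_cast; linarith only [kwR, wR]
      have t3 : 802 * (w:ℝ) ≤ Real.exp w := by
        exact lin_exp_w w wR
      linarith only [t1, t2, t3]
    have b2 : ((10 ^ s1 : ℕ) : ℝ) ≤ Real.exp (3 * s) := by
      push_cast
      refine (ten_pow_le_exp s1).trans (Real.exp_le_exp.2 (by linarith))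
    calc _ ≤ Real.exp h * Real.exp w * Real.exp (3 * s) := by gcongr
      _ = Real.exp (h + w + 3 * s) := by rw [Real.exp_add, Real.exp_add]
      _ ≤ _ := Real.exp_le_exp.2 (by rw [hH2R]; linarith)
  · intro σ
    simp only [map_mul, map_sub, map_pow, map_natCast, norm_mul, Complex.norm_natCast, map_one, norm_pow, map_ofNat]
    have hz := hgσ σ
    have b1 : ‖2 * σ g - 1‖ ≤ 5 := by
      refine (norm_sub_le _ _).trans ?_
      rw [norm_mul]; norm_num; linarith
    have b2 : ‖σ g - 1‖ ≤ 3 := by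
      refine (norm_sub_le _ _).trans ?_
      norm_num; linarith
    have b3 : ‖σ g‖ ^ r1 ≤ Real.exp p := by
      calc _ ≤ (2:ℝ) ^ r1 := pow_le_pow_left₀ (norm_nonneg _) hz _
        _ ≤ Real.exp r1 := two_pow_le_exp r1
        _ ≤ _ := Real.exp_le_exp.2 r1R
    have b4 : ((10 ^ s2 : ℕ) : ℝ) ≤ Real.exp (3 * s) := by
      push_cast
      refine (ten_pow_le_exp s2).trans (Real.exp_le_exp.2 (by linarith))
    have b5 : ‖(9:ℂ)‖ * (5 * 3) ≤ Real.exp 10 := by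
      have := two_pow_le_exp 10
      norm_num at this ⊢
      linarith
    calc _ ≤ ‖(9:ℂ)‖ * (5 * 3) * Real.exp p * Real.exp (3 * s) := by gcongr
      _ ≤ Real.exp 10 * Real.exp p * Real.exp (3 * s) := by gcongr
      _ = Real.exp (10 + p + 3 * s) := by rw [Real.exp_add, Real.exp_add]
      _ ≤ _ := Real.exp_le_exp.2 (by
        have : (0:ℝ) ≤ h := by positivity
        rw [hH2R]; linarith)
  · rw [map_natCast]; positivity
  · simp only [map_mul, map_sub, map_pow, map_natCast, map_one, map_ofNat, hg]
    rw [← hC]; push_cast; positivity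
  · rw [map_pow, map_natCast, hg, ← hexpell]; push_cast; rfl
  · simp only [map_mul, map_sub, map_pow, map_natCast, map_one, map_ofNat, hg]
    rw [← hC]; push_cast; rw [← hB, hvN]
  · calc 2 * p * N = 2 * (p * N) := by ring
      _ ≤ 2 * 2 ^ w := by omega
  · have e1 : (4 * (k:ℝ) ^ 2 * w * (h + w + 13 + 6 * Q) + 1) * (2 * Q) ≤ ν := by exact_mod_cast hQ2
    have e2 : 24 * (k:ℝ) ^ 2 * w ≤ Q := by exact_mod_cast hQ1
    have e3 : 4 * (k:ℝ) ^ 2 * w * (h + w + 13 + 6 * Q) + 1 ≤ ν / (2 * p) := by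
      rw [le_div_iff₀ (by linarith)]
      refine le_trans ?_ e1
      gcongr
    have e4 : 4 * (k:ℝ) ^ 2 * w * (3 * (ν / (p * Q))) ≤ ν / (2 * p) := by
      have : 4 * (k:ℝ) ^ 2 * w * (3 * (ν / (p * Q))) = 24 * (k:ℝ) ^ 2 * w * (ν / (2 * p * Q)) := by field_simp; ring
      rw [this]
      calc _ ≤ Q * ((ν:ℝ) / (2 * p * Q)) := by gcongr
        _ = _ := by field_simp
    have e5 : (ν:ℝ) / p = ν / (2 * p) + ν / (2 * p) := by field_simp; ring
    have e6 : 4 * (k:ℝ) ^ 2 * w * H2 ≤ N := by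
      calc 4 * (k:ℝ) ^ 2 * w * H2 ≤ 4 * (k:ℝ) ^ 2 * w * (h + w + 13 + 4 * Q + 3 * (ν / (p * Q))) := by gcongr
        _ ≤ 4 * (k:ℝ) ^ 2 * w * (h + w + 13 + 6 * Q + 3 * (ν / (p * Q))) := by gcongr; norm_num
        _ = 4 * (k:ℝ) ^ 2 * w * (h + w + 13 + 6 * Q) + 4 * (k:ℝ) ^ 2 * w * (3 * (ν / (p * Q))) := by ring
        _ ≤ N := by linarith only [e3, e4, e5, hNR]
    exact_mod_cast e6
  · have hlog := congrArg Real.log hvN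
    rw [Real.log_mul (by positivity) (by positivity), Real.log_mul (by positivity) (by positivity),
      Real.log_mul (Real.exp_pos _).ne' (by positivity), Real.log_exp, Real.log_mul (by positivity) (by positivity),
      Real.log_mul (by positivity) (by positivity), Real.log_pow, Real.log_pow, Real.log_pow] at hlog
    have MR : (1:ℝ) ≤ M := by exact_mod_cast hM
    have a1 : 0 ≤ Real.log M := Real.log_nonneg MR
    have a2 : Real.log M ≤ h := by
      have := Real.log_le_log (by linarith) hMh
      rwa [Real.log_exp] at this
    have a3 : 0 ≤ Real.log B := Real.log_nonneg hB1
    have a4 : Real.log B ≤ 1 := by have := Real.log_le_sub_one_of_pos (by linarith : 0 < B); linarith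
    have a5 : 0 ≤ Real.log (9 * C) := Real.log_nonneg (by linarith)
    have a6 : Real.log (9 * C) ≤ 5 := by
      have : Real.log (9 * C) ≤ Real.log (Real.exp 5) := by
        apply Real.log_le_log (by linarith)
        have := two_pow_le_exp 5
        norm_num at this
        linarith
      rwa [Real.log_exp] at this
    have a7 : 0 ≤ Real.log α := Real.log_nonneg (by linarith)
    have a8 : Real.log α ≤ 1 := by have := Real.log_le_sub_one_of_pos hα0; linarith
    have a9 := log_ten_le
    have a10 : 0 ≤ Real.log 10 := Real.log_nonneg (by norm_num)
    have a11 : (s1:ℝ) * Real.log 10 ≤ s1 * 3 := by gcongr; linarith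
    have a12 : (s2:ℝ) * Real.log 10 ≤ s2 * 3 := by gcongr; linarith
    have a13 : (r1:ℝ) * Real.log α ≤ p * 1 := by gcongr
    have a14 : 0 ≤ (s1:ℝ) * Real.log 10 := by positivity
    have a15 : 0 ≤ (s2:ℝ) * Real.log 10 := by positivity
    have a16 : 0 ≤ (r1:ℝ) * Real.log α := by positivity
    have a17 := abs_le.1 hΛ1
    have : |ell| * N = |N * ell| := by rw [abs_mul, Nat.abs_cast, mul_comm]
    have hh0 : (0:ℝ) ≤ h := by positivity
    have hsum : (s:ℝ) = s1 + s2 := by rw [hs]; push_cast; ring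
    rw [this, abs_le, hH2R]
    constructor <;> linarith only [a17.1, a17.2, hlog, a1, a2, a3, a4, a5, a6, a11, a12, a13, a14, a15, a16, hh0, hsum, pR, wR]

theorem lL_grow (k : ℕ) (hk : 471 ≤ k) (n : ℕ) (hn : 2 ≤ n) :
    3 ≤ lucasL k n ∧ 31 * lucasL k n ≤ 16 * lucasL k (n + 1) ∧ lucasL k (n + 1) ≤ 2 * lucasL k n := by
  induction n using Nat.strong_induction_on with
  | _ n ih =>
    have key : ∀ j, ∀ m, 2 ≤ m → m + j ≤ n → 3 ≤ lucasL k m ∧ 2 ^ j * lucasL k m ≤ 2 ^ j * lucasL k (m + j) := by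
      intro j
      induction j with
      | zero =>
        intro m hm hmn
        rcases Nat.lt_or_ge m n with h | h
        · exact ⟨(ih m h hm).1, by simp⟩
        · refine ⟨?_, by simp⟩
          rcases Nat.lt_or_ge 2 m with h' | h'
          · obtain ⟨e, rfl⟩ : ∃ e, m = e + 1 := ⟨m - 1, by omega⟩
            have := ih e (by omega) (by omega)
            linarith [this.1, this.2.1]
          · have : m = 2 := by omega
            subst this; rw [lL_two k (by omega)]
      | succ j ihj =>
        intro m hm hmn
        have h1 := ihj m hm (by omega)
        refine ⟨h1.1, ?_⟩
        have h2 := ih (m + j) (by omega) (by omega)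
        have h3 : lucasL k m ≤ lucasL k (m + j) := le_of_mul_le_mul_left h1.2 (by positivity)
        refine mul_le_mul_of_nonneg_left ?_ (by positivity)
        rw [← add_assoc]; linarith [h2.1, h2.2.1]
    have pos : 3 ≤ lucasL k n := (key 0 n hn (by omega)).1
    have mono : ∀ m, 2 ≤ m → m ≤ n → lucasL k m ≤ lucasL k n := by
      intro m hm hmn
      have := (key (n - m) m hm (by omega)).2
      rw [show m + (n - m) = n by omega] at this
      exact le_of_mul_le_mul_left this (by positivity)
    have big : ∀ m, 2 ≤ m → m + 5 ≤ n → 16 * lucasL k m ≤ lucasL k n := by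
      intro m hm hmn
      have a0 := ih m (by omega) hm
      have a1 := ih (m+1) (by omega) (by omega)
      have a2 := ih (m+2) (by omega) (by omega)
      have a3 := ih (m+3) (by omega) (by omega)
      have a4 := ih (m+4) (by omega) (by omega)
      have := mono (m+5) (by omega) (by omega)
      norm_num [add_assoc] at a0 a1 a2 a3 a4
      linarith [a0.1, a0.2.1, a1.2.1, a2.2.1, a3.2.1, a4.2.1]
    refine ⟨pos, ?_⟩
    rcases Nat.lt_or_ge n k with h | h
    · rw [lL_dbl k n (by omega) hn h]; constructor <;> linarith
    · obtain ⟨e, rfl⟩ : ∃ e, n = e + k := ⟨n - k, by omega⟩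
      rw [lL_rec k e (by omega)]
      have hb := big 2 le_rfl (by omega)
      rw [lL_two k (by omega)] at hb
      rcases Nat.lt_or_ge e 2 with h' | h'
      · interval_cases e
        · rw [lL_zero k (by omega)]; constructor <;> linarith
        · rw [lL_one k (by omega)]; constructor <;> linarith
      · have := big e h' (by omega)
        have h3 := (key 0 e h' (by omega)).1
        constructor <;> linarith

theorem lL_upper (k : ℕ) (hk : 471 ≤ k) (n : ℕ) : lucasL k (n + 2) < 2 ^ (n + 2) := by
  have : lucasL k (n + 2) ≤ 3 * 2 ^ n := by
    induction n with
    | zero => simp [lL_two k (by omega)]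
    | succ n ih =>
      have := (lL_grow k hk (n + 2) (by omega)).2.2
      rw [pow_succ]
      rw [show n + 1 + 2 = n + 2 + 1 by ring]
      linarith
  have h2 : (0:ℤ) < 2 ^ n := by positivity
  rw [pow_add]; linarith

theorem lL_lower (k : ℕ) (hk : 471 ≤ k) (n : ℕ) : (3:ℝ) * (31/16) ^ n ≤ lucasL k (n + 2) := by
  induction n with
  | zero => simp [lL_two k (by omega)]
  | succ n ih =>
    have := (lL_grow k hk (n + 2) (by omega)).2.1
    have h : (31:ℝ) * lucasL k (n + 2) ≤ 16 * lucasL k (n + 2 + 1) := by exact_mod_cast this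
    rw [pow_succ, show n + 1 + 2 = n + 2 + 1 by ring]
    linarith

theorem nine_L (d1 d2 : ℕ) (a b L : ℤ) (heq : L = a * ((10 ^ d1 - 1) / 9) + (b - a) * 10 ^ d2) :
    9 * L = a * 10 ^ d1 + 9 * (b - a) * 10 ^ d2 - a := by
  have h : (9:ℤ) ∣ 10 ^ d1 - 1 := by
    have := sub_one_dvd_pow_sub_one (10:ℤ) d1
    norm_num at this
    exact this
  have h2 := Int.mul_ediv_cancel' h
  rw [heq]
  linear_combination a * h2

theorem L_size (d1 d2 : ℕ) (a b L : ℤ) (hd : d2 < d1) (hd1 : 3 ≤ d1)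
    (ha1 : 1 ≤ a) (ha9 : a ≤ 9) (hb0 : 0 ≤ b) (hb9 : b ≤ 9)
    (h : 9 * L = a * 10 ^ d1 + 9 * (b - a) * 10 ^ d2 - a) :
    10 ^ (d1 - 3) ≤ L ∧ L < 2 * 10 ^ d1 := by
  obtain ⟨e, rfl⟩ : ∃ e, d1 = d2 + 1 + e := ⟨d1 - d2 - 1, by omega⟩
  have hx : (1:ℤ) ≤ 10 ^ d2 := one_le_pow₀ (by norm_num)
  have hy : (1:ℤ) ≤ 10 ^ e := one_le_pow₀ (by norm_num)
  have e1 : (10:ℤ) ^ (d2 + 1 + e) = 1000 * 10 ^ (d2 + 1 + e - 3) := by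
    rw [show (1000:ℤ) = 10 ^ 3 by norm_num, ← pow_add]; congr 1; omega
  have hz : (1:ℤ) ≤ 10 ^ (d2 + 1 + e - 3) := one_le_pow₀ (by norm_num)
  have e2 : (10:ℤ) ^ (d2 + 1 + e) = 10 * 10 ^ d2 * 10 ^ e := by ring
  have h3 : 10 * (10:ℤ) ^ d2 ≤ 10 ^ (d2 + 1 + e) := by rw [e2]; nlinarith
  have h4 : 9 * (b - a) * (10:ℤ)^d2 ≥ -(9 * a * 10 ^ d2) := by nlinarith
  have h5 : 9 * (b - a) * (10:ℤ)^d2 ≤ 72 * 10 ^ d2 := by nlinarith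
  set X := (10:ℤ) ^ (d2 + 1 + e)
  have h6 : a * (10 * (10:ℤ) ^ d2) ≤ a * X := by gcongr
  have h7 : a * X ≤ 9 * X := by gcongr
  have h8 : X ≤ a * X := by nlinarith
  constructor
  · nlinarith
  · nlinarith

theorem log_near (x y ε : ℝ) (hx : 0 < x) (hy : 0 < y) (hε : ε ≤ 1/2) (h : |x - y| ≤ ε * y) :
    ∃ Λ : ℝ, x = Real.exp Λ * y ∧ |Λ| ≤ 2 * ε := by
  have h1 := abs_le.1 h
  have hε0 : 0 ≤ ε := by
    by_contra h0
    push Not at h0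
    have := abs_nonneg (x - y)
    nlinarith
  refine ⟨Real.log (x / y), ?_, ?_⟩
  · rw [Real.exp_log (by positivity)]; field_simp
  · rw [abs_le]
    constructor
    · have h2 : y / x ≤ 1 + 2 * ε := by
        rw [div_le_iff₀ hx]; nlinarith
      have h3 := Real.log_le_sub_one_of_pos (show 0 < y / x by positivity)
      rw [Real.log_div hx.ne' hy.ne']
      rw [Real.log_div hy.ne' hx.ne'] at h3
      linarith
    · have h2 : x / y ≤ 1 + ε := by
        rw [div_le_iff₀ hy]; nlinarith
      have h3 := Real.log_le_sub_one_of_pos (show 0 < x / y by positivity)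
      linarith

theorem B_bounds (k : ℕ) (hk : 471 ≤ k) (α : ℝ) (h1 : 15/8 < α) (h2 : α < 2) (hα : α ^ k * (2 - α) = 1) :
    1 ≤ (k + 1) * α - 2 * k ∧ (k + 1) * α - 2 * k ≤ 2 := by
  have h3 := pow_158 k (by omega)
  have h4 : (15/8:ℝ) ^ k ≤ α ^ k := pow_le_pow_left₀ (by norm_num) h1.le k
  have h5 : 2 * (k:ℝ) * (2 - α) ≤ 1 := by
    rw [← hα]; exact mul_le_mul_of_nonneg_right (by linarith) (by linarith)
  have h6 : 0 ≤ (k:ℝ) * (2 - α) := mul_nonneg (by positivity) (by linarith)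
  constructor <;> nlinarith

theorem d_bound (n d : ℕ) (hn : 200 ≤ n) (h : (10:ℤ) ^ (d - 3) ≤ 2 ^ n) : 3 * d ≤ n - 1 := by
  have h1 : (10:ℤ) ^ ((d - 3) * 13) ≤ 10 ^ (4 * n) := by
    calc (10:ℤ) ^ ((d - 3) * 13) = (10 ^ (d - 3)) ^ 13 := pow_mul _ _ _
      _ ≤ (2 ^ n) ^ 13 := pow_le_pow_left₀ (by positivity) h 13
      _ = (2 ^ 13) ^ n := by rw [← pow_mul, ← pow_mul, mul_comm]
      _ ≤ (10 ^ 4) ^ n := pow_le_pow_left₀ (by norm_num) (by norm_num) n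
      _ = _ := by rw [← pow_mul]
  have := (pow_le_pow_iff_right₀ (by norm_num : (1:ℤ) < 10)).1 h1
  omega

theorem big_w_aux (c w : ℕ) (hw : 968 ≤ w) (hc : c * 968 ^ 54 < 2 ^ 967) : c * w ^ 54 < 2 ^ (w - 1) := by
  induction w, hw using Nat.le_induction with
  | base => exact hc
  | succ w hw ih =>
    clear hc
    have h1 : (w + 1) * 968 ≤ 969 * w := by omega
    have h2 : ((w + 1) * 968) ^ 54 ≤ (969 * w) ^ 54 := Nat.pow_le_pow_left h1 54
    have h3 : (w + 1) ^ 54 ≤ 2 * w ^ 54 := by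
      rw [mul_pow, mul_pow] at h2
      have h4 : 969 ^ 54 ≤ 2 * 968 ^ 54 := by norm_num
      have : (w + 1) ^ 54 * 968 ^ 54 ≤ (2 * w ^ 54) * 968 ^ 54 := by
        calc _ ≤ _ := h2
          _ ≤ (2 * 968 ^ 54) * w ^ 54 := Nat.mul_le_mul_right _ h4
          _ = _ := by ring
      exact Nat.le_of_mul_le_mul_right this (by positivity)
    rw [show w + 1 - 1 = w - 1 + 1 by omega, pow_succ 2]
    generalize (w + 1) ^ 54 = P at h3 ⊢
    generalize w ^ 54 = R at h3 ih
    generalize 2 ^ (w - 1) = S at ih ⊢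
    nlinarith

set_option exponentiation.threshold 2000 in
theorem big_w (w : ℕ) (hw : 968 ≤ w) : (2 * (10 ^ 6 * 200 ^ 6 * w ^ 9)) ^ 6 < 2 ^ (w - 1) := by
  have h := big_w_aux ((2 * (10 ^ 6 * 200 ^ 6)) ^ 6) w hw (by norm_num)
  rwa [← mul_assoc, mul_pow, ← pow_mul]

theorem M_pos (a b : ℤ) (δ : ℕ) (hδ : 1 ≤ δ) (ha1 : 1 ≤ a) (ha9 : a ≤ 9) (hb0 : 0 ≤ b) (hb9 : b ≤ 9) :
    1 ≤ a * 10 ^ δ + 9 * (b - a) ∧ a * 10 ^ δ + 9 * (b - a) ≤ 81 * 10 ^ δ := by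
  have : (10:ℤ) ≤ 10 ^ δ := by
    calc (10:ℤ) = 10 ^ 1 := by norm_num
      _ ≤ _ := pow_le_pow_right₀ (by norm_num) hδ
  constructor <;> nlinarith

set_option maxHeartbeats 1600000 in
theorem step_one (k n w z T : ℕ) (hk : 471 ≤ k) (hn : 200 ≤ n) (hw : 968 ≤ w) (hkw : k ≤ 200 * w)
    (hnw : n < 2 ^ w) (hT : T = k ^ 2 * w) (hz : 10 ^ 6 * T ^ 3 ≤ z) (hz6 : z ^ 6 ≤ n) (hn6 : n ≤ 2 * z ^ 6)
    (α : ℝ) (h1 : 15/8 < α) (h2 : α < 2) (hα : α ^ k * (2 - α) = 1)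
    (d2 δ : ℕ) (hd : 3 * (d2 + δ) ≤ n - 1) (a b : ℤ)
    (ha1 : 1 ≤ a) (ha9 : a ≤ 9) (hb0 : 0 ≤ b) (hb9 : b ≤ 9)
    (heq : 9 * lucasL k n = a * 10 ^ (d2 + δ) + 9 * (b - a) * 10 ^ d2 - a) :
    (10:ℝ) ^ δ ≤ 1000 * Real.exp (1274 * T ^ 2 * z ^ 4) := by
  have hexp1 : 1 ≤ Real.exp (1274 * (T:ℝ) ^ 2 * z ^ 4) := Real.one_le_exp (by positivity)
  rcases le_or_gt ((10:ℝ) ^ δ) 1000 with hsm | hbig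
  · linarith
  obtain ⟨B1, B2⟩ := B_bounds k hk α h1 h2 hα
  have hl := lucas_alpha k hk α h1 h2 hα n (by omega)
  have hC1 : 1 ≤ (2 * α - 1) * (α - 1) := (BC_bounds k hk α h1 h2 hα).2.1
  set B : ℝ := (k + 1) * α - 2 * k
  set C : ℝ := (2 * α - 1) * (α - 1)
  have hx2 : (1:ℝ) ≤ 10 ^ d2 := one_le_pow₀ (by norm_num)
  have heqR : 9 * (lucasL k n : ℝ) = a * (10 ^ d2 * 10 ^ δ) + 9 * (b - a) * 10 ^ d2 - a := by
    rw [← pow_add]; exact_mod_cast heq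
  have ha1R : (1:ℝ) ≤ a := by exact_mod_cast ha1
  have ha9R : (a:ℝ) ≤ 9 := by exact_mod_cast ha9
  have hb0R : (0:ℝ) ≤ b := by exact_mod_cast hb0
  have hb9R : (b:ℝ) ≤ 9 := by exact_mod_cast hb9
  have hy0 : 0 < 9 * C * α ^ (n - 1) := by positivity
  set y : ℝ := 9 * C * α ^ (n - 1) with hy
  set X : ℝ := 10 ^ δ
  set D : ℝ := 10 ^ d2
  obtain ⟨m, rfl⟩ : ∃ m : ℕ, a = m := ⟨a.toNat, by omega⟩
  push_cast at *
  have hdiff : |(m:ℝ) * B * (D * X) - y| ≤ 216 * D := by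
    have e : (m:ℝ) * B * (D * X) - y = 9 * (B * (lucasL k n : ℝ) - C * α ^ (n - 1)) - 9 * (B * (b - m)) * D + B * m := by
      rw [hy]; linear_combination -B * heqR
    have h3 : |B * ((b:ℝ) - m)| ≤ 2 * 9 := by
      rw [abs_mul]
      refine mul_le_mul (abs_le.2 ⟨by linarith, B2⟩) (abs_le.2 ⟨by linarith, by linarith⟩) (abs_nonneg _) (by norm_num)
    have h4 : B * m ≤ 18 := by nlinarith only [B1, B2, ha1R, ha9R]
    have h5 : 0 ≤ B * m := by positivity
    have h6 : |B * ((b:ℝ) - m) * D| ≤ 18 * D := by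
      rw [abs_mul, abs_of_nonneg (by linarith : 0 ≤ D)]
      exact mul_le_mul_of_nonneg_right (h3.trans (by norm_num)) (by linarith only [hx2])
    rw [e]
    have l1 := abs_le.1 hl
    have l2 := abs_le.1 h6
    rw [abs_le]
    constructor <;> linarith only [l1.1, l1.2, l2.1, l2.2, h4, h5, hx2]
  have hxlow : D * X ≤ (m:ℝ) * B * (D * X) := by
    have h7 : 1 ≤ (m:ℝ) * B := one_le_mul_of_one_le_of_one_le ha1R B1
    have h8 : 0 < D * X := by positivity
    exact le_mul_of_one_le_left h8.le h7
  have hX0 : 0 < X := by positivity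
  have hylow : D * X * (784/1000) ≤ y := by
    have h7 := (abs_le.1 hdiff).2
    have h8 : D * 1000 ≤ D * X := mul_le_mul_of_nonneg_left hbig.le (by linarith only [hx2])
    linarith only [h7, h8, hxlow]
  obtain ⟨Λ, hΛ, hΛ2⟩ := log_near ((m:ℝ) * B * (D * X)) y (280 / X) (by positivity) hy0
    (by rw [div_le_iff₀ hX0]; linarith)
    (by
      refine hdiff.trans ?_
      rw [div_mul_eq_mul_div, le_div_iff₀ hX0]
      linarith only [hylow, mul_pos (by linarith only [hx2] : 0 < D) hX0])
  have hT1 : 10 ^ 6 ≤ T := by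
    rw [hT]
    calc 10 ^ 6 ≤ 471 ^ 2 * 968 := by norm_num
      _ ≤ k ^ 2 * w := by gcongr
  have hwT : w ≤ T := by
    rw [hT]; exact Nat.le_mul_of_pos_left _ (by positivity)
  have hTz : 10 ^ 6 * T ≤ z := by
    refine le_trans ?_ hz
    have : T ≤ T ^ 3 := Nat.le_self_pow (by norm_num) T
    omega
  have hz1 : 1 ≤ z := by omega
  have hzz : z ≤ z ^ 2 := Nat.le_self_pow (by norm_num) z
  have hwz : w + 16 ≤ z ^ 2 := by omega
  have hTz2 : 24 * T ≤ z ^ 2 := by omega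
  have hQ2 : (4 * k ^ 2 * w * (3 + w + 13 + 6 * z ^ 2) + 1) * (2 * z ^ 2) ≤ n - 1 := by
    rw [mul_assoc 4, ← hT]
    have a1 : 4 * T * (3 + w + 13 + 6 * z ^ 2) + 1 ≤ 29 * T * z ^ 2 := by
      have : 4 * T * (3 + w + 13 + 6 * z ^ 2) ≤ 4 * T * (7 * z ^ 2) := Nat.mul_le_mul_left _ (by omega)
      have h9 : 1 ≤ T * z ^ 2 := Nat.one_le_iff_ne_zero.2 (by positivity)
      linarith only [this, h9]
    have a2 : (4 * T * (3 + w + 13 + 6 * z ^ 2) + 1) * (2 * z ^ 2) ≤ 29 * T * z ^ 2 * (2 * z ^ 2) := Nat.mul_le_mul_right _ a1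
    have a3 : 59 * T * z ^ 4 ≤ z ^ 6 := by
      calc 59 * T * z ^ 4 ≤ z ^ 2 * z ^ 4 := Nat.mul_le_mul_right _ (by omega)
        _ = _ := by ring
    have a4 : 1 ≤ T * z ^ 4 := Nat.one_le_iff_ne_zero.2 (by positivity)
    have a5 : 29 * T * z ^ 2 * (2 * z ^ 2) = 58 * (T * z ^ 4) := by ring
    have a6 : 59 * (T * z ^ 4) ≤ z ^ 6 := by rw [← mul_assoc]; exact a3
    omega
  have main := three_log k hk α h1 h2 hα m (d2 + δ) (n - 1) (z ^ 2) w 3 (by omega)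
    (by have := two_pow_le_exp 3
        have h9 : (9:ℝ) ≤ Real.exp (3:ℕ) := by
          rw [show ((3:ℕ):ℝ) = 3 * 1 by norm_num, show (3:ℝ) * 1 = ((3:ℕ):ℝ) * 1 by norm_num, Real.exp_nat_mul]
          have := Real.exp_one_gt_d9
          calc (9:ℝ) ≤ 2.7 ^ 3 := by norm_num
            _ ≤ _ := pow_le_pow_left₀ (by norm_num) (by linarith) 3
        linarith)
    hw hkw (by omega) (by omega) hd (by rw [mul_assoc, ← hT]; exact hTz2) hQ2 Λ
    (by refine hΛ2.trans ?_
        rw [← mul_div_assoc, div_le_one hX0]; linarith)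
    (by rw [pow_add, hΛ])
  have hzR : (1:ℝ) ≤ z := by exact_mod_cast hz1
  have hT2R : (49 * (k:ℝ) ^ 4 * w ^ 2) = 49 * T ^ 2 := by rw [hT]; push_cast; ring
  have hle : 49 * (k:ℝ) ^ 4 * w ^ 2 * (2 * ((z ^ 2 : ℕ):ℝ) * ((3:ℕ) + w + 13 + 6 * ((z ^ 2 : ℕ):ℝ)) + 6 * (((n - 1 : ℕ):ℝ) / ((z ^ 2 : ℕ):ℝ))) ≤ 1274 * T ^ 2 * z ^ 4 := by
    rw [hT2R]
    have b1 : ((n - 1 : ℕ):ℝ) / ((z ^ 2 : ℕ):ℝ) ≤ 2 * z ^ 4 := by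
      rw [div_le_iff₀ (by positivity)]
      have : ((n - 1 : ℕ):ℝ) ≤ ((2 * z ^ 6 : ℕ):ℝ) := by exact_mod_cast (by omega)
      push_cast at this ⊢
      calc _ ≤ _ := this
        _ = _ := by ring
    have b2 : (w:ℝ) + 16 ≤ z ^ 2 := by exact_mod_cast hwz
    have b3 : (2 * ((z ^ 2 : ℕ):ℝ) * ((3:ℕ) + w + 13 + 6 * ((z ^ 2 : ℕ):ℝ)) + 6 * (((n - 1 : ℕ):ℝ) / ((z ^ 2 : ℕ):ℝ))) ≤ 26 * z ^ 4 := by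
      have : (2 * ((z ^ 2 : ℕ):ℝ) * ((3:ℕ) + w + 13 + 6 * ((z ^ 2 : ℕ):ℝ))) ≤ 2 * (z:ℝ) ^ 2 * (7 * (z:ℝ) ^ 2) := by
        push_cast
        gcongr
        linarith
      calc _ ≤ 2 * (z:ℝ) ^ 2 * (7 * (z:ℝ) ^ 2) + 6 * (2 * (z:ℝ) ^ 4) := add_le_add this (mul_le_mul_of_nonneg_left b1 (by norm_num))
        _ = _ := by ring
    calc _ ≤ 49 * (T:ℝ) ^ 2 * (26 * z ^ 4) := by gcongr
      _ = _ := by ring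
  have m2 : Real.exp (-(1274 * (T:ℝ) ^ 2 * z ^ 4)) ≤ 2 * (280 / X) :=
    (Real.exp_le_exp.2 (neg_le_neg hle)).trans (main.trans hΛ2)
  rw [Real.exp_neg, ← mul_div_assoc, le_div_iff₀ hX0, inv_mul_le_iff₀ (Real.exp_pos _)] at m2
  linarith

theorem exp_half_le (α : ℝ) (h1 : 15/8 < α) (ν : ℕ) : Real.exp (ν * (1/2)) ≤ α ^ ν := by
  rw [Real.exp_nat_mul]
  refine pow_le_pow_left₀ (Real.exp_pos _).le ?_ ν
  have h : Real.exp (1/2) ^ 2 = Real.exp 1 := by rw [← Real.exp_nat_mul]; norm_num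
  have := Real.exp_one_lt_d9
  by_contra h0
  push Not at h0
  nlinarith

set_option maxHeartbeats 1600000 in
theorem step_two (k n w z T : ℕ) (hk : 471 ≤ k) (hn : 200 ≤ n) (hw : 968 ≤ w) (hkw : k ≤ 200 * w)
    (hnw : n < 2 ^ w) (hT : T = k ^ 2 * w) (hz : 10 ^ 6 * T ^ 3 ≤ z) (hz6 : z ^ 6 ≤ n) (hn6 : n ≤ 2 * z ^ 6)
    (α : ℝ) (h1 : 15/8 < α) (h2 : α < 2) (hα : α ^ k * (2 - α) = 1)
    (d M : ℕ) (hd : 3 * d ≤ n - 1) (a : ℕ) (hM : 1 ≤ M)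
    (ha9 : a ≤ 9) (hMb : (M:ℝ) ≤ Real.exp ((1275 * T ^ 2 * z ^ 4 : ℕ):ℝ))
    (heq : 9 * lucasL k n = M * 10 ^ d - a) : False := by
  obtain ⟨B1, B2⟩ := B_bounds k hk α h1 h2 hα
  have hl := lucas_alpha k hk α h1 h2 hα n (by omega)
  have hC1 : 1 ≤ (2 * α - 1) * (α - 1) := (BC_bounds k hk α h1 h2 hα).2.1
  set B : ℝ := (k + 1) * α - 2 * k
  set C : ℝ := (2 * α - 1) * (α - 1)
  have heqR : 9 * (lucasL k n : ℝ) = M * 10 ^ d - a := by exact_mod_cast heq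
  have ha9R : (a:ℝ) ≤ 9 := by exact_mod_cast ha9
  have ha0R : (0:ℝ) ≤ a := by positivity
  have hMR : (1:ℝ) ≤ M := by exact_mod_cast hM
  have hν := exp_half_le α h1 (n - 1)
  have hA0 : 0 < α ^ (n - 1) := by positivity
  set A := α ^ (n - 1) with hA
  have hnR : (200:ℝ) ≤ n := by exact_mod_cast hn
  have hA24 : 24 ≤ A := by
    refine le_trans ?_ hν
    have := Real.add_one_le_exp (((n - 1 : ℕ):ℝ) * (1/2))
    have h3 : ((n - 1 : ℕ):ℝ) ≥ 199 := by
      have : 199 ≤ n - 1 := by omega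
      exact_mod_cast this
    linarith
  have hy0 : 0 < 9 * C * A := by positivity
  have hx0 : 0 < (M:ℝ) * B * 10 ^ d := by positivity
  obtain ⟨Λ, hΛ, hΛ2⟩ := log_near ((M:ℝ) * B * 10 ^ d) (9 * C * A) (6 / A) hx0 hy0
    (by rw [div_le_iff₀ hA0]; linarith)
    (by
      have e : (M:ℝ) * B * 10 ^ d - 9 * C * A = 9 * (B * (lucasL k n : ℝ) - C * A) + B * a := by
        linear_combination -B * heqR
      have h4 : B * a ≤ 18 := by nlinarith only [B1, B2, ha0R, ha9R]
      have h5 : 0 ≤ B * a := by positivity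
      have l1 := abs_le.1 hl
      have : 6 / A * (9 * C * A) = 54 * C := by field_simp; ring
      rw [this, e, abs_le]
      constructor <;> linarith only [l1.1, l1.2, h4, h5, hC1])
  have hT1 : 10 ^ 6 ≤ T := by
    rw [hT]
    calc 10 ^ 6 ≤ 471 ^ 2 * 968 := by norm_num
      _ ≤ k ^ 2 * w := by gcongr
  have hwT : w ≤ T := by
    rw [hT]; exact Nat.le_mul_of_pos_left _ (by positivity)
  have hT0 : 0 < T := by omega
  set Q : ℕ := z / (18 * T) with hQ
  have hTT : T ^ 3 = T * (T * T) := by ring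
  have hTT1 : T * 10 ^ 6 ≤ T * T := Nat.mul_le_mul_left _ hT1
  have hTT2 : T * (T * 10 ^ 6) ≤ T * (T * T) := Nat.mul_le_mul_left _ hTT1
  have hTT3 : T * T ≤ T * (T * 10 ^ 6) := Nat.mul_le_mul_left _ (by omega)
  have hQlow : 24 * T ≤ Q := by
    rw [hQ, Nat.le_div_iff_mul_le (by omega)]
    linarith only [hz, hTT, hTT2, hTT3]
  have hQup : Q * (18 * T) ≤ z := Nat.div_mul_le_self _ _
  have hQlow2 : z ≤ Q * (19 * T) := by
    have h3 : z < (Q + 1) * (18 * T) := by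
      rw [hQ]; exact Nat.lt_mul_of_div_lt (Nat.lt_succ_self _) (by omega)
    have h4 : 24 * T * T ≤ Q * T := Nat.mul_le_mul_right _ hQlow
    have h5 : 1 * T ≤ T * T := Nat.mul_le_mul_right _ hT0
    linarith only [h3, h4, h5]
  have hQz : Q ≤ z := Nat.div_le_self _ _
  have hz1 : 1 ≤ z := by omega
  have hQ0 : 1 ≤ Q := by omega
  have hz4 : z ≤ z ^ 4 := Nat.le_self_pow (by norm_num) z
  have hT2 : 10 ^ 12 ≤ T ^ 2 := by
    calc 10 ^ 12 = (10 ^ 6) ^ 2 := by norm_num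
      _ ≤ _ := Nat.pow_le_pow_left hT1 2
  have hTz : T ≤ z := by omega
  have hsmall : w + 13 + 6 * Q ≤ 10 * z ^ 4 := by omega
  have hh : 1275 * T ^ 2 * z ^ 4 + w + 13 + 6 * Q ≤ 1276 * T ^ 2 * z ^ 4 := by
    have h4 : 10 ^ 12 * z ^ 4 ≤ T ^ 2 * z ^ 4 := Nat.mul_le_mul_right _ hT2
    linarith only [h4, hsmall]
  have hQ2 : (4 * k ^ 2 * w * (1275 * T ^ 2 * z ^ 4 + w + 13 + 6 * Q) + 1) * (2 * Q) ≤ n - 1 := by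
    rw [mul_assoc 4, ← hT]
    have a0 : 1 ≤ T ^ 3 * z ^ 4 := Nat.one_le_iff_ne_zero.2 (by positivity)
    have a1 : 4 * T * (1275 * T ^ 2 * z ^ 4 + w + 13 + 6 * Q) + 1 ≤ 5105 * (T ^ 3 * z ^ 4) := by
      calc _ ≤ 4 * T * (1276 * T ^ 2 * z ^ 4) + T ^ 3 * z ^ 4 := by gcongr
        _ = _ := by ring
    have a2 : (4 * T * (1275 * T ^ 2 * z ^ 4 + w + 13 + 6 * Q) + 1) * (2 * Q) ≤ 5105 * (T ^ 3 * z ^ 4) * (2 * z) := by gcongr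
    have a3 : 10 ^ 6 * T ^ 3 * z ^ 5 ≤ z * z ^ 5 := Nat.mul_le_mul_right _ hz
    have a4 : 1 ≤ T ^ 3 * z ^ 5 := Nat.one_le_iff_ne_zero.2 (by positivity)
    have a5 : 5105 * (T ^ 3 * z ^ 4) * (2 * z) = 10210 * (T ^ 3 * z ^ 5) := by ring
    have a6 : 10 ^ 6 * T ^ 3 * z ^ 5 = 10 ^ 6 * (T ^ 3 * z ^ 5) := by ring
    have a7 : z * z ^ 5 = z ^ 6 := by ring
    omega
  have main := three_log k hk α h1 h2 hα M d (n - 1) Q w (1275 * T ^ 2 * z ^ 4) hM hMb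
    hw hkw (by omega) (by omega) hd (by rw [mul_assoc, ← hT]; exact hQlow) hQ2 Λ
    (by refine hΛ2.trans ?_
        rw [← mul_div_assoc, div_le_one hA0]; linarith)
    hΛ
  have hzR : (1:ℝ) ≤ z := by exact_mod_cast hz1
  have hQR : (1:ℝ) ≤ Q := by exact_mod_cast hQ0
  have hT0R : (0:ℝ) < T := by exact_mod_cast hT0
  have hT2R : (49 * (k:ℝ) ^ 4 * w ^ 2) = 49 * T ^ 2 := by rw [hT]; push_cast; ring
  have hnR2 : ((n - 1 : ℕ):ℝ) ≤ 2 * z ^ 6 := by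
    have : ((n - 1 : ℕ):ℝ) ≤ ((2 * z ^ 6 : ℕ):ℝ) := by exact_mod_cast (by omega)
    push_cast at this ⊢
    exact this
  have b1 : ((n - 1 : ℕ):ℝ) / (Q:ℝ) ≤ 38 * (T * z ^ 5) := by
    rw [div_le_iff₀ (by positivity)]
    have h3 : (z:ℝ) ≤ Q * (19 * T) := by exact_mod_cast hQlow2
    calc _ ≤ _ := hnR2
      _ = 2 * (z:ℝ) ^ 5 * z := by ring
      _ ≤ 2 * (z:ℝ) ^ 5 * (Q * (19 * T)) := by gcongr
      _ = _ := by ring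
  have b2 : 2 * (Q:ℝ) * (((1275 * T ^ 2 * z ^ 4 : ℕ):ℝ) + w + 13 + 6 * Q) ≤ 142 * (T * z ^ 5) := by
    have h3 : (Q:ℝ) * (18 * T) ≤ z := by exact_mod_cast hQup
    have h4 : ((1275 * T ^ 2 * z ^ 4 : ℕ):ℝ) + w + 13 + 6 * Q ≤ 1276 * T ^ 2 * z ^ 4 := by exact_mod_cast hh
    calc _ ≤ 2 * (Q:ℝ) * (1276 * T ^ 2 * z ^ 4) := by gcongr
      _ = (2 * 1276 / 18) * T * z ^ 4 * (Q * (18 * T)) := by ring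
      _ ≤ (2 * 1276 / 18) * T * z ^ 4 * z := by gcongr
      _ = (2 * 1276 / 18) * (T * z ^ 5) := by ring
      _ ≤ _ := by gcongr; norm_num
  have hle : 49 * (k:ℝ) ^ 4 * w ^ 2 * (2 * (Q:ℝ) * (((1275 * T ^ 2 * z ^ 4 : ℕ):ℝ) + w + 13 + 6 * Q) + 6 * (((n - 1 : ℕ):ℝ) / (Q:ℝ))) ≤ 18130 * (T ^ 3 * z ^ 5) := by
    rw [hT2R]
    calc _ ≤ 49 * (T:ℝ) ^ 2 * (142 * (T * z ^ 5) + 6 * (38 * (T * z ^ 5))) := by gcongr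
      _ = _ := by ring
  have m2 : Real.exp (-(18130 * ((T:ℝ) ^ 3 * z ^ 5))) ≤ 2 * (6 / A) :=
    (Real.exp_le_exp.2 (neg_le_neg hle)).trans (main.trans hΛ2)
  rw [Real.exp_neg, ← mul_div_assoc, le_div_iff₀ hA0, inv_mul_le_iff₀ (Real.exp_pos _)] at m2
  have h12 : (2 * 6 : ℝ) ≤ Real.exp 11 := by
    have := Real.add_one_le_exp (11:ℝ); linarith
  have m3 : Real.exp (((n - 1 : ℕ):ℝ) * (1/2)) ≤ Real.exp (18130 * ((T:ℝ) ^ 3 * z ^ 5) + 11) := by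
    rw [Real.exp_add]
    refine hν.trans (m2.trans ?_)
    gcongr
  rw [Real.exp_le_exp] at m3
  have h5 : (n:ℝ) - 1 = ((n - 1 : ℕ):ℝ) := by
    rw [Nat.cast_sub (by omega)]; simp
  have h6 : (z:ℝ) ^ 6 ≤ n := by exact_mod_cast hz6
  have h7 : 10 ^ 6 * (T:ℝ) ^ 3 ≤ z := by exact_mod_cast hz
  have h8 : 10 ^ 6 * (T:ℝ) ^ 3 * z ^ 5 ≤ z * z ^ 5 := by gcongr
  have h9 : 1 ≤ (T:ℝ) ^ 3 * z ^ 5 := by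
    have : 1 ≤ T ^ 3 * z ^ 5 := Nat.one_le_iff_ne_zero.2 (by positivity)
    exact_mod_cast this
  have h10 : (z:ℝ) * z ^ 5 = z ^ 6 := by ring
  linarith

theorem exists_sixth (n : ℕ) : ∃ z, z ^ 6 ≤ n ∧ n < (z + 1) ^ 6 := by
  have h : ∃ z, n < (z + 1) ^ 6 := ⟨n, by
    calc n < n + 1 := Nat.lt_succ_self _
      _ ≤ _ := Nat.le_self_pow (by norm_num) _⟩
  classical
  refine ⟨Nat.find h, ?_, Nat.find_spec h⟩
  by_contra h0
  push Not at h0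
  rcases Nat.eq_zero_or_pos (Nat.find h) with h1 | h1
  · rw [h1] at h0; simp at h0
  · have := Nat.find_min h (m := Nat.find h - 1) (by omega)
    rw [Nat.sub_add_cancel h1] at this
    exact this h0

theorem case_small (k n w : ℕ) (hk : 471 ≤ k) (hw : 968 ≤ w) (hkw : k ≤ 200 * w)
    (hnw : n < 2 ^ w) (hnw' : 2 ^ (w - 1) ≤ n)
    (d1 d2 : ℕ) (a b : ℤ) (hd : d2 < d1) (hd1 : 3 ≤ d1)
    (ha1 : 1 ≤ a) (ha9 : a ≤ 9) (hb0 : 0 ≤ b) (hb9 : b ≤ 9)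
    (heq : 9 * lucasL k n = a * 10 ^ d1 + 9 * (b - a) * 10 ^ d2 - a) : False := by
  have hn : 200 ≤ n := by
    have : 2 ^ 8 ≤ 2 ^ (w - 1) := Nat.pow_le_pow_right (by norm_num) (by omega)
    omega
  obtain ⟨α, h1, h2, hα⟩ := exists_alpha k hk
  obtain ⟨z, hz6, hzn⟩ := exists_sixth n
  obtain ⟨T, hT⟩ : ∃ T, T = k ^ 2 * w := ⟨_, rfl⟩
  have hz0 : 1 ≤ z := by
    by_contra h0
    have : z = 0 := by omega
    subst this
    simp at hzn; omega
  have hTw : 10 ^ 6 * T ^ 3 ≤ 10 ^ 6 * 200 ^ 6 * w ^ 9 := by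
    rw [hT]
    calc 10 ^ 6 * (k ^ 2 * w) ^ 3 ≤ 10 ^ 6 * ((200 * w) ^ 2 * w) ^ 3 := by gcongr
      _ = _ := by ring
  have hz : 10 ^ 6 * T ^ 3 ≤ z := by
    by_contra h0
    push Not at h0
    have h3 : (z + 1) ^ 6 ≤ (2 * (10 ^ 6 * 200 ^ 6 * w ^ 9)) ^ 6 := Nat.pow_le_pow_left (by omega) 6
    have := big_w w hw
    omega
  have hT0 : 1 ≤ T := by
    rw [hT]; exact Nat.one_le_iff_ne_zero.2 (by positivity)
  have hzb : 10 ^ 6 ≤ z := by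
    have : 1 ≤ T ^ 3 := Nat.one_le_pow _ _ hT0
    omega
  have hn6 : n ≤ 2 * z ^ 6 := by
    have h3 : ((z + 1) * 10) ^ 6 ≤ (11 * z) ^ 6 := Nat.pow_le_pow_left (by omega) 6
    rw [mul_pow, mul_pow] at h3
    omega
  have hs := L_size d1 d2 a b _ hd hd1 ha1 ha9 hb0 hb9 heq
  have hu := lL_upper k hk (n - 2)
  rw [show n - 2 + 2 = n by omega] at hu
  have h3d := d_bound n d1 hn (by linarith [hs.1])
  obtain ⟨δ, rfl⟩ : ∃ δ, d1 = d2 + δ := ⟨d1 - d2, by omega⟩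
  have h10 := step_one k n w z T hk hn hw hkw hnw hT hz hz6 hn6 α h1 h2 hα d2 δ h3d a b ha1 ha9 hb0 hb9 heq
  have hMp := M_pos a b δ (by omega) ha1 ha9 hb0 hb9
  obtain ⟨m, rfl⟩ : ∃ m : ℕ, a = m := ⟨a.toNat, by omega⟩
  obtain ⟨M, hM⟩ : ∃ M : ℕ, (m:ℤ) * 10 ^ δ + 9 * (b - m) = M := ⟨((m:ℤ) * 10 ^ δ + 9 * (b - m)).toNat, by omega⟩
  rw [hM] at hMp
  refine step_two k n w z T hk hn hw hkw hnw hT hz hz6 hn6 α h1 h2 hα d2 M (by omega) m (by omega) (by omega) ?_ ?_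
  · have h3 : (M:ℝ) ≤ 81 * 10 ^ δ := by exact_mod_cast hMp.2
    have h4 := two_pow_le_exp 17
    have h5 : (1:ℝ) * 17 ≤ (T:ℝ) ^ 2 * z ^ 4 := by
      have a1 : 1 ≤ T ^ 2 := Nat.one_le_pow _ _ hT0
      have a2 : z ≤ z ^ 4 := Nat.le_self_pow (by norm_num) z
      have : 1 * 17 ≤ T ^ 2 * z ^ 4 := Nat.mul_le_mul a1 (by omega)
      exact_mod_cast this
    calc (M:ℝ) ≤ 81 * (1000 * Real.exp (1274 * T ^ 2 * z ^ 4)) := by linarith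
      _ = 81000 * Real.exp (1274 * T ^ 2 * z ^ 4) := by ring
      _ ≤ Real.exp ((17:ℕ):ℝ) * Real.exp (1274 * T ^ 2 * z ^ 4) := by
          gcongr
          refine le_trans (by norm_num) h4
      _ = Real.exp ((17:ℕ) + 1274 * T ^ 2 * z ^ 4) := (Real.exp_add _ _).symm
      _ ≤ _ := Real.exp_le_exp.2 (by push_cast; linarith)
  · rw [heq, ← hM]; ring

def sS (k t r : ℕ) : ℤ := (-1) ^ t * lucasL k ((k + 1) * t + r)

theorem sS_succ (k t r : ℕ) (hk : 2 ≤ k) (hr : r + 1 ≤ k) :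
    sS k (t + 1) (r + 1) = sS k t (r + 1) + 2 * sS k (t + 1) r := by
  have h := lL_rec k ((k + 1) * t + (r + 1)) hk
  rw [sS, sS, sS, show (k + 1) * (t + 1) + (r + 1) = (k + 1) * t + (r + 1) + k + 1 by ring, h,
    show (k + 1) * (t + 1) + r = (k + 1) * t + (r + 1) + k by ring]
  ring

theorem sS_wrap (k t : ℕ) (hk : 2 ≤ k) : sS k (t + 1) 0 = sS k t 0 - 2 * sS k t k := by
  have h := lL_rec k ((k + 1) * t) hk
  rw [sS, sS, sS, show (k + 1) * (t + 1) + 0 = (k + 1) * t + k + 1 by ring, h, add_zero]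
  ring

def base (r : ℕ) : ℤ := if r = 0 then 2 else if r = 1 then 1 else 3 * 2 ^ (r - 2)

theorem sS_base (k r : ℕ) (hk : 2 ≤ k) (hr : r ≤ k) : sS k 0 r = base r := by
  have h : ∀ j, j + 2 ≤ k → lucasL k (j + 2) = 3 * 2 ^ j := by
    intro j
    induction j with
    | zero => intro _; simp [lL_two k hk]
    | succ j ih =>
      intro hj
      have := lL_dbl k (j + 2) hk (by omega) (by omega)
      rw [show j + 1 + 2 = j + 2 + 1 by ring, this, ih (by omega)]; ring
  rw [sS, base]
  simp only [pow_zero, one_mul, mul_zero, zero_add]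
  split_ifs with h0 h1
  · rw [h0, lL_zero k hk]
  · rw [h1, lL_one k hk]
  · have := h (r - 2) (by omega)
    rw [show r - 2 + 2 = r by omega] at this
    exact this

def PP : ℕ → ℕ → ℤ
  | 0, _ => 2
  | (r + 1), 0 => base (r + 1)
  | (r + 1), (t + 1) => PP (r + 1) t + 2 * PP r (t + 1)

theorem PP_zero (t : ℕ) : PP 0 t = 2 := by simp [PP]
theorem PP_base (r : ℕ) : PP r 0 = base r := by
  cases r with
  | zero => simp [PP, base]
  | succ r => simp [PP]
theorem PP_succ (r t : ℕ) : PP (r + 1) (t + 1) = PP (r + 1) t + 2 * PP r (t + 1) := by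
  rw [PP]

theorem base_pos (r : ℕ) : 1 ≤ base r := by
  rw [base]; split_ifs
  · norm_num
  · norm_num
  · have : (1:ℤ) ≤ 2 ^ (r - 2) := one_le_pow₀ (by norm_num)
    linarith

theorem PP_pos (r t : ℕ) : 1 ≤ PP r t := by
  induction r generalizing t with
  | zero => rw [PP_zero]; norm_num
  | succ r ih =>
    induction t with
    | zero => rw [PP_base]; exact base_pos _
    | succ t iht => rw [PP_succ]; linarith [ih (t + 1)]

theorem PP_two (r t : ℕ) : 2 ≤ PP r (t + 1) := by
  cases r with
  | zero => rw [PP_zero]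
  | succ r => rw [PP_succ]; linarith [PP_pos (r + 1) t, PP_pos r (t + 1)]

theorem PP_le (r t : ℕ) : PP r t ≤ 3 * (4 * ((t:ℤ) + 1)) ^ r := by
  induction r generalizing t with
  | zero => rw [PP_zero]; norm_num
  | succ r ih =>
    induction t with
    | zero =>
      rw [PP_base, base]
      have h0 : (1:ℤ) ≤ 4 ^ (r + 1) := one_le_pow₀ (by norm_num)
      have h1 : (2:ℤ) ^ (r + 1 - 2) ≤ 4 ^ (r + 1) := by
        calc (2:ℤ) ^ (r + 1 - 2) ≤ 2 ^ (r + 1) := pow_le_pow_right₀ (by norm_num) (by omega)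
          _ ≤ _ := pow_le_pow_left₀ (by norm_num) (by norm_num) _
      norm_num
      split_ifs <;> linarith
    | succ t iht =>
      rw [PP_succ]
      have h := ih (t + 1)
      push_cast at h ⊢
      have hm : (4 * ((t:ℤ) + 1)) ^ r ≤ (4 * ((t:ℤ) + 1 + 1)) ^ r := pow_le_pow_left₀ (by positivity) (by linarith) r
      have hp : 0 ≤ (4 * ((t:ℤ) + 1 + 1)) ^ r := by positivity
      rw [pow_succ] at iht ⊢
      have : (4 * ((t:ℤ) + 1)) ^ r * (4 * ((t:ℤ) + 1)) ≤ (4 * ((t:ℤ) + 1 + 1)) ^ r * (4 * ((t:ℤ) + 1)) :=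
        mul_le_mul_of_nonneg_right hm (by positivity)
      linarith

def cc (m t : ℕ) : ℕ := 3 * (t + m).choose m + 4 * (t + m - 1).choose m + (t + m - 2).choose m

theorem cc_zero (m : ℕ) (hm : 1 ≤ m) : cc m 0 = 3 := by
  rw [cc]
  rw [Nat.choose_eq_zero_of_lt (show 0 + m - 1 < m by omega), Nat.choose_eq_zero_of_lt (show 0 + m - 2 < m by omega)]
  simp

theorem cc_succ (m t : ℕ) (hm : 1 ≤ m) : cc (m + 1) (t + 1) = cc (m + 1) t + cc m (t + 1) := by
  obtain ⟨j, hj⟩ : ∃ j, t + m = j + 1 := ⟨t + m - 1, by omega⟩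
  rw [cc, cc, cc]
  rw [show t + 1 + (m + 1) = (j + 2) + 1 by omega, show t + (m + 1) = j + 2 by omega, show t + 1 + m = j + 2 by omega]
  rw [show j + 2 + 1 - 1 = (j + 1) + 1 by omega, show j + 2 + 1 - 2 = j + 1 by omega, show j + 2 - 1 = j + 1 by omega,
    show j + 2 - 2 = j by omega]
  rw [Nat.choose_succ_succ (j + 2) m, Nat.choose_succ_succ (j + 1) m, Nat.choose_succ_succ j m]
  ring

theorem cc_one (t : ℕ) : (cc 1 (t + 1) : ℤ) = 2 * (1 + 4 * ((t:ℤ) + 1)) := by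
  rw [cc]; simp; ring

theorem PP_one (t : ℕ) : PP 1 t = 1 + 4 * t := by
  induction t with
  | zero => rw [PP_base]; simp [base]
  | succ t ih => rw [PP_succ, ih, PP_zero]; push_cast; ring

theorem PP_cc (r t : ℕ) : PP (r + 2) t = 2 ^ r * cc (r + 2) t := by
  induction r generalizing t with
  | zero =>
    induction t with
    | zero => rw [PP_base, cc_zero _ (by omega)]; simp [base]
    | succ t iht =>
      rw [PP_succ, iht, cc_succ 1 t le_rfl]; push_cast
      rw [cc_one, PP_one]; push_cast; ring
  | succ r ih =>
    induction t with
    | zero => rw [PP_base, cc_zero _ (by omega)]; simp [base]; ring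
    | succ t iht =>
      rw [show r + 1 + 2 = (r + 2) + 1 by ring] at iht ⊢
      rw [PP_succ, iht, ih, cc_succ (r + 2) t (by omega)]; push_cast; ring

theorem dvd_grid (K : ℕ) (G : ℤ) (f : ℕ → ℕ → ℤ) (h0 : ∀ r, r ≤ K → 2 ^ r * G ∣ f 0 r)
    (hG : ∀ t, G ∣ f t 0) (hs : ∀ t r, r + 1 ≤ K → f (t + 1) (r + 1) = f t (r + 1) + 2 * f (t + 1) r)
    (r t : ℕ) (hr : r ≤ K) : 2 ^ r * G ∣ f t r := by
  induction r generalizing t with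
  | zero => simpa using hG t
  | succ r ih =>
    induction t with
    | zero => exact h0 _ hr
    | succ t iht =>
      rw [hs t r hr]
      refine dvd_add iht ?_
      rw [pow_succ, mul_comm (2 ^ r) 2, mul_assoc]
      exact mul_dvd_mul_left 2 (ih (t + 1) (by omega))

theorem sS_dvd (k t r : ℕ) (hk : 2 ≤ k) (hr : r ≤ k) : (2:ℤ) ^ r ∣ 4 * sS k t r := by
  have := dvd_grid k 1 (fun t r => 4 * sS k t r) ?_ (fun t => one_dvd _) ?_ r t hr
  · simpa using this
  · intro r hr
    simp only [sS_base k r hk hr, mul_one]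
    rw [base]; split_ifs with h0 h1
    · simp [h0]
    · simp [h1]
    · obtain ⟨j, rfl⟩ : ∃ j, r = j + 2 := ⟨r - 2, by omega⟩
      exact ⟨3, by simp; ring⟩
  · intro t r hr
    simp only [sS_succ k t r hk hr]; ring

theorem D_dvd (k t r : ℕ) (hk : 2 ≤ k) (hr : r ≤ k) : (2:ℤ) ^ r * 2 ^ (k + 1) ∣ 4 * (sS k t r - PP r t) := by
  refine dvd_grid k (2 ^ (k + 1)) (fun t r => 4 * (sS k t r - PP r t)) ?_ ?_ ?_ r t hr
  · intro r hr
    simp [sS_base k r hk hr, PP_base]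
  · intro t
    induction t with
    | zero => simp [sS_base k 0 hk (by omega), PP_base]
    | succ t ih =>
      have h := sS_dvd k t k hk le_rfl
      simp only [PP_zero, sS_wrap k t hk] at ih ⊢
      rw [show 4 * (sS k t 0 - 2 * sS k t k - 2) = 4 * (sS k t 0 - 2) - 2 * (4 * sS k t k) by ring]
      refine dvd_sub ih ?_
      rw [pow_succ, mul_comm]
      exact mul_dvd_mul_left 2 h
  · intro t r hr
    simp only [sS_succ k t r hk hr, PP_succ]; ring

def eE (k t r : ℕ) : ℕ := if t = 0 then 0 else cc (k + 1 + r) (t - 1)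

theorem eE_succ (k t r : ℕ) : eE k (t + 1) (r + 1) = eE k t (r + 1) + eE k (t + 1) r := by
  cases t with
  | zero => simp [eE, cc_zero (k + 1 + (r + 1)) (by omega), cc_zero (k + 1 + r) (by omega)]
  | succ t =>
    simp only [eE, Nat.add_eq_zero_iff, one_ne_zero, and_false, if_false, Nat.add_sub_cancel]
    rw [← add_assoc (k + 1) r 1]
    exact cc_succ (k + 1 + r) t (by omega)

theorem eE_wrap (k t : ℕ) (hk : 1 ≤ k) : eE k (t + 1) 0 = eE k t 0 + cc k t := by
  cases t with
  | zero => simp [eE, cc_zero, cc_zero k hk]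
  | succ t =>
    simp only [eE, Nat.add_eq_zero_iff, one_ne_zero, and_false, if_false, Nat.add_sub_cancel, add_zero]
    exact cc_succ k t hk

theorem F_dvd (k t r : ℕ) (hk : 2 ≤ k) (hr : r ≤ k) :
    (2:ℤ) ^ r * 2 ^ (2 * k + 2) ∣ 4 * (sS k t r - PP r t) + 2 ^ (k + 1 + r) * eE k t r := by
  refine dvd_grid k (2 ^ (2 * k + 2)) (fun t r => 4 * (sS k t r - PP r t) + 2 ^ (k + 1 + r) * eE k t r) ?_ ?_ ?_ r t hr
  · intro r hr
    simp [sS_base k r hk hr, PP_base, eE]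
  · intro t
    induction t with
    | zero => simp [sS_base k 0 hk (by omega), PP_base, eE]
    | succ t ih =>
      have h := D_dvd k t k hk le_rfl
      obtain ⟨j, hj⟩ : ∃ j, k = j + 2 := ⟨k - 2, by omega⟩
      have hp : 4 * PP k t = 2 ^ k * cc k t := by
        rw [hj, PP_cc]; ring
      simp only [PP_zero, sS_wrap k t hk, eE_wrap k t (by omega)] at ih ⊢
      have e : 4 * (sS k t 0 - 2 * sS k t k - 2) + 2 ^ (k + 1 + 0) * ((eE k t 0 + cc k t : ℕ) : ℤ) =
        (4 * (sS k t 0 - 2) + 2 ^ (k + 1 + 0) * (eE k t 0 : ℤ)) - 2 * (4 * (sS k t k - PP k t)) := by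
        push_cast
        linear_combination (-2) * hp
      rw [e]
      refine dvd_sub ih ?_
      rw [show (2:ℤ) ^ (2 * k + 2) = 2 * (2 ^ k * 2 ^ (k + 1)) by ring]
      exact mul_dvd_mul_left 2 h
  · intro t r hr
    simp only [sS_succ k t r hk hr, PP_succ, eE_succ]; push_cast; ring

theorem cc_val (M τ w : ℕ) (hM : 1 ≤ M) (hτ : 2 ≤ τ) (hw : τ + M < 2 ^ w) : ¬ 2 ^ (3 * w + 3) ∣ cc M τ := by
  intro h
  obtain ⟨N, hN⟩ : ∃ N, τ + M = N + 2 := ⟨τ + M - 2, by omega⟩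
  obtain ⟨u, rfl⟩ : ∃ u, τ = u + 2 := ⟨τ - 2, by omega⟩
  have c1 : (N + 1).choose M * (N + 2) = (N + 2).choose M * (u + 2) := by
    have := Nat.choose_mul_succ_eq (N + 1) M
    rwa [show N + 1 + 1 - M = u + 2 by omega] at this
  have c2 : N.choose M * (N + 1) = (N + 1).choose M * (u + 1) := by
    have := Nat.choose_mul_succ_eq N M
    rwa [show N + 1 - M = u + 1 by omega] at this
  set X := 3 * (N + 2) * (N + 1) + 4 * (u + 2) * (N + 1) + (u + 2) * (u + 1) with hX
  have key : cc M (u + 2) * ((N + 2) * (N + 1)) = (N + 2).choose M * X := by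
    rw [cc, hN, show N + 2 - 1 = N + 1 by omega, show N + 2 - 2 = N by omega, hX]
    zify at c1 c2 ⊢
    linear_combination (4 * ((N:ℤ) + 1) + (u + 1)) * c1 + (N + 2) * c2
  have hdvd : 2 ^ (3 * w + 3) ∣ (N + 2).choose M * X := key ▸ Dvd.dvd.mul_right h _
  have hch : (N + 2).choose M ≠ 0 := (Nat.choose_pos (by omega)).ne'
  have hX0 : X ≠ 0 := by positivity
  have h1 := (Nat.Prime.pow_dvd_iff_le_factorization Nat.prime_two (mul_ne_zero hch hX0)).1 hdvd
  rw [Nat.factorization_mul hch hX0] at h1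
  simp only [Finsupp.add_apply] at h1
  have h2 : ((N + 2).choose M).factorization 2 ≤ Nat.log 2 (N + 2) := Nat.factorization_choose_le_log
  have h3 : Nat.log 2 (N + 2) < w := Nat.log_lt_of_lt_pow (by omega) (by omega)
  have h4 : 2 ^ X.factorization 2 ≤ X := Nat.ordProj_le 2 hX0
  have h5 : X < 2 ^ (2 * w + 3) := by
    have hu : u ≤ N := by omega
    have : X ≤ 8 * ((N + 2) * (N + 2)) := by rw [hX]; nlinarith
    have h6 : (N + 2) * (N + 2) < 2 ^ w * 2 ^ w := Nat.mul_lt_mul'' (by omega) (by omega)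
    have h7 : 2 ^ (2 * w + 3) = 8 * (2 ^ w * 2 ^ w) := by ring
    omega
  have h6 : X.factorization 2 < 2 * w + 3 := (Nat.pow_lt_pow_iff_right (by norm_num)).1 (lt_of_le_of_lt h4 h5)
  omega

theorem not_256 (d2 : ℕ) (a b : ℤ) (ha1 : 1 ≤ a) (ha9 : a ≤ 9) (hb0 : 0 ≤ b) (hb9 : b ≤ 9) :
    ¬ (256:ℤ) ∣ 9 * (b - a) * 10 ^ d2 - a := by
  rcases Nat.lt_or_ge d2 4 with h | h
  · interval_cases d2 <;> interval_cases a <;> omega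
  · obtain ⟨e, rfl⟩ : ∃ e, d2 = 4 + e := ⟨d2 - 4, by omega⟩
    rw [pow_add]
    generalize (10:ℤ) ^ e = y
    rintro ⟨c, hc⟩
    have : a = 16 * (9 * (b - a) * 625 * y - 16 * c) := by linear_combination -hc
    omega

theorem r_le (k t r d1 d2 : ℕ) (hk : 2 ≤ k) (hr : r ≤ k) (a b : ℤ) (ha1 : 1 ≤ a) (ha9 : a ≤ 9) (hb0 : 0 ≤ b) (hb9 : b ≤ 9)
    (hd1 : 8 ≤ d1)
    (heq : 9 * lucasL k ((k + 1) * t + r) = a * 10 ^ d1 + 9 * (b - a) * 10 ^ d2 - a) : r ≤ 9 := by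
  by_contra h
  push Not at h
  have h1 := sS_dvd k t r hk hr
  have h2 : (2:ℤ) ^ 10 ∣ 4 * sS k t r := (pow_dvd_pow 2 (by omega)).trans h1
  have h3 : (256:ℤ) ∣ sS k t r := by
    have : (4:ℤ) * 256 ∣ 4 * sS k t r := by norm_num at h2 ⊢; exact h2
    exact (mul_dvd_mul_iff_left (by norm_num)).1 this
  have h4 : (256:ℤ) ∣ lucasL k ((k + 1) * t + r) := by
    rw [sS] at h3
    rcases neg_one_pow_eq_or ℤ t with e | e <;> rw [e] at h3
    · simpa using h3
    · simpa using h3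
  have h5 : (256:ℤ) ∣ a * 10 ^ d1 := by
    refine Dvd.dvd.mul_left ?_ _
    calc (256:ℤ) ∣ 10 ^ 8 := by norm_num
      _ ∣ _ := pow_dvd_pow _ hd1
  apply not_256 d2 a b ha1 ha9 hb0 hb9
  have : 9 * (b - a) * 10 ^ d2 - a = 9 * lucasL k ((k + 1) * t + r) - a * 10 ^ d1 := by linear_combination -heq
  rw [this]
  exact dvd_sub (Dvd.dvd.mul_left h4 _) h5

/-- exact identification of the low part. -/
theorem low_part (m d1 d2 : ℕ) (a b L p ε : ℤ) (hε : ε = 1 ∨ ε = -1) (ha1 : 1 ≤ a) (ha9 : a ≤ 9) (hb0 : 0 ≤ b) (hb9 : b ≤ 9)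
    (hp : 2 ≤ p) (hm : m ≤ d1) (hL : (2:ℤ) ^ m ∣ L - ε * p) (hpm : 82 * (9 * p + 9) ^ 4 < 2 ^ m)
    (heq : 9 * L = a * 10 ^ d1 + 9 * (b - a) * 10 ^ d2 - a) : 9 * (L - ε * p) = a * 10 ^ d1 := by
  have t10 : ∀ j : ℕ, (2:ℤ) ^ j ∣ 10 ^ j := fun j => pow_dvd_pow_of_dvd (by norm_num) j
  have h1 : (2:ℤ) ^ m ∣ a * 10 ^ d1 := Dvd.dvd.mul_left ((t10 m).trans (pow_dvd_pow _ hm)) _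
  have h2 : (2:ℤ) ^ m ∣ (9 * (ε * p) + a) - 9 * (b - a) * 10 ^ d2 := by
    have : (9 * (ε * p) + a) - 9 * (b - a) * 10 ^ d2 = a * 10 ^ d1 - 9 * (L - ε * p) := by linear_combination heq
    rw [this]
    exact dvd_sub h1 (Dvd.dvd.mul_left hL _)
  have habs : |9 * (ε * p) + a| ≤ 9 * p + 9 := by
    rw [abs_le]; rcases hε with e | e <;> rw [e] <;> constructor <;> linarith
  have hne : 9 * (ε * p) + a ≠ 0 := by
    rcases hε with e | e <;> rw [e] <;> omega
  have hY : 1 ≤ 9 * p + 9 := by linarith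
  set Y := 9 * p + 9
  have hY4 : Y ≤ Y ^ 4 := le_self_pow₀ hY (by norm_num)
  have hY0 : 0 ≤ Y ^ 4 := by positivity
  have hd2 : (2:ℤ) ^ d2 ≤ Y := by
    by_contra h0
    push Not at h0
    obtain ⟨g, hg1, hg2, hg3⟩ : ∃ g, g ≤ m ∧ g ≤ d2 ∧ Y < (2:ℤ) ^ g := by
      rcases le_total m d2 with h | h
      · exact ⟨m, le_rfl, h, by linarith⟩
      · exact ⟨d2, h, le_rfl, h0⟩
    have h3 : (2:ℤ) ^ g ∣ 9 * (ε * p) + a := by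
      have a1 := (pow_dvd_pow (2:ℤ) hg1).trans h2
      have a2 : (2:ℤ) ^ g ∣ 9 * (b - a) * 10 ^ d2 := Dvd.dvd.mul_left ((t10 g).trans (pow_dvd_pow _ hg2)) _
      have := dvd_add a1 a2
      simpa using this
    exact hne (Int.eq_zero_of_abs_lt_dvd h3 (by linarith))
  have h10 : (10:ℤ) ^ d2 ≤ Y ^ 4 := by
    calc (10:ℤ) ^ d2 ≤ 16 ^ d2 := pow_le_pow_left₀ (by norm_num) (by norm_num) _
      _ = (2 ^ d2) ^ 4 := by rw [← pow_mul, mul_comm, pow_mul]; norm_num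
      _ ≤ _ := pow_le_pow_left₀ (by positivity) hd2 4
  have h11 : |9 * (b - a) * 10 ^ d2| ≤ 81 * Y ^ 4 := by
    rw [abs_mul, abs_of_nonneg (by positivity : (0:ℤ) ≤ 10 ^ d2)]
    have : |9 * (b - a)| ≤ 81 := by rw [abs_le]; constructor <;> linarith
    calc _ ≤ 81 * (10:ℤ) ^ d2 := mul_le_mul_of_nonneg_right this (by positivity)
      _ ≤ _ := by linarith
  have h12 := Int.eq_zero_of_abs_lt_dvd h2 (lt_of_le_of_lt (abs_sub _ _) (by linarith))
  linear_combination heq - h12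

theorem d1_low (k n d1 : ℕ) (L : ℤ) (hnk : k + 1 ≤ n) (hlow : (3:ℝ) * (31/16) ^ (n - 2) ≤ L) (hL : L < 2 * 10 ^ d1) : k / 4 ≤ d1 := by
  by_contra h0
  push Not at h0
  have hLR : (L:ℝ) < 2 * 10 ^ d1 := by exact_mod_cast hL
  have h1 : (31/16:ℝ) ^ (4 * d1 + 1) ≤ (31/16) ^ (n - 2) := pow_le_pow_right₀ (by norm_num) (by omega)
  rw [pow_add, pow_mul] at h1
  have h2 : (10:ℝ) ^ d1 ≤ ((31/16) ^ 4) ^ d1 := pow_le_pow_left₀ (by norm_num) (by norm_num) _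
  have h3 : (0:ℝ) < 10 ^ d1 := by positivity
  linarith

theorem d_bound2 (n d : ℕ) (h : (10:ℤ) ^ (d - 3) ≤ 2 ^ n) : 13 * (d - 3) ≤ 4 * n := by
  have h1 : (10:ℤ) ^ ((d - 3) * 13) ≤ 10 ^ (4 * n) := by
    calc (10:ℤ) ^ ((d - 3) * 13) = (10 ^ (d - 3)) ^ 13 := pow_mul _ _ _
      _ ≤ (2 ^ n) ^ 13 := pow_le_pow_left₀ (by positivity) h 13
      _ = (2 ^ 13) ^ n := by rw [← pow_mul, ← pow_mul, mul_comm]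
      _ ≤ (10 ^ 4) ^ n := pow_le_pow_left₀ (by norm_num) (by norm_num) n
      _ = _ := by rw [← pow_mul]
  have := (pow_le_pow_iff_right₀ (by norm_num : (1:ℤ) < 10)).1 h1
  omega

theorem d1_up (k n d1 w : ℕ) (L : ℤ) (hw : 968 ≤ w) (hkw : 200 * w ≤ k) (hn : 4 * k + 4 ≤ n)
    (hlow : (3:ℝ) * (31/16) ^ (n - 2) ≤ L) (hL : L < 2 * 10 ^ d1) (hd : d1 ≤ k + 13 + 3 * w) : False := by
  have hLR : (L:ℝ) < 2 * 10 ^ d1 := by exact_mod_cast hL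
  have h1 : (31/16:ℝ) ^ (4 * (7 * (k / 7))) ≤ (31/16) ^ (n - 2) := pow_le_pow_right₀ (by norm_num) (by omega)
  rw [pow_mul, pow_mul] at h1
  have h2 : ((10:ℝ) ^ 8) ^ (k / 7) ≤ (((31/16) ^ 4) ^ 7) ^ (k / 7) := pow_le_pow_left₀ (by norm_num) (by norm_num) _
  rw [← pow_mul] at h2
  have h3 : (10:ℝ) ^ d1 ≤ 10 ^ (8 * (k / 7)) := pow_le_pow_right₀ (by norm_num) (by omega)
  have h4 : (0:ℝ) < 10 ^ d1 := by positivity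
  linarith

theorem case_large (k n w : ℕ) (hw : 968 ≤ w) (hkw : 200 * w ≤ k)
    (hnw : n < 2 ^ w) (hnk : k + 1 ≤ n)
    (d1 d2 : ℕ) (a b : ℤ) (hd : d2 < d1) (hd1 : 3 ≤ d1)
    (ha1 : 1 ≤ a) (ha9 : a ≤ 9) (hb0 : 0 ≤ b) (hb9 : b ≤ 9)
    (heq : 9 * lucasL k n = a * 10 ^ d1 + 9 * (b - a) * 10 ^ d2 - a) : False := by
  have hk : 471 ≤ k := by omega
  have hs := L_size d1 d2 a b _ hd hd1 ha1 ha9 hb0 hb9 heq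
  have hu := lL_upper k hk (n - 2)
  have hlow := lL_lower k hk (n - 2)
  rw [show n - 2 + 2 = n by omega] at hu hlow
  have hd1k := d1_low k n d1 _ hnk hlow hs.2
  have hdb := d_bound2 n d1 (by linarith [hs.1])
  obtain ⟨t, r, hr, rfl⟩ : ∃ t r, r ≤ k ∧ n = (k + 1) * t + r :=
    ⟨n / (k + 1), n % (k + 1), by have := Nat.mod_lt n (show 0 < k + 1 by omega); omega, (Nat.div_add_mod _ _).symm⟩
  have ht : 1 ≤ t := by
    by_contra h0
    have : t = 0 := by omega
    subst this; omega
  have hr9 := r_le k t r d1 d2 (by omega) hr a b ha1 ha9 hb0 hb9 (by omega) heq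
  have htn : t + k ≤ (k + 1) * t := by nlinarith
  obtain ⟨ε, hε, hε'⟩ : ∃ ε : ℤ, (ε = 1 ∨ ε = -1) ∧ ε = (-1) ^ t := ⟨_, neg_one_pow_eq_or ℤ t, rfl⟩
  have hεε : ε * ε = 1 := by rcases hε with e | e <;> rw [e] <;> norm_num
  have hsL : sS k t r = ε * lucasL k ((k + 1) * t + r) := by rw [sS, hε']
  set L := lucasL k ((k + 1) * t + r) with hLdef
  have hD := D_dvd k t r (by omega) hr
  have hF := F_dvd k t r (by omega) hr
  have hp2 : 2 ≤ PP r t := by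
    obtain ⟨u, rfl⟩ : ∃ u, t = u + 1 := ⟨t - 1, by omega⟩
    exact PP_two r u
  have hple := PP_le r t
  have hDe : sS k t r - PP r t = ε * (L - ε * PP r t) := by
    rw [hsL]; linear_combination (PP r t) * hεε
  rw [hDe] at hD hF
  have hLp : (2:ℤ) ^ (k - 1) ∣ L - ε * PP r t := by
    have h3 : (4:ℤ) * 2 ^ (k - 1) ∣ 4 * (ε * (L - ε * PP r t)) := by
      refine dvd_trans ?_ hD
      rw [show (4:ℤ) * 2 ^ (k - 1) = 2 ^ (k + 1) by
        rw [show k + 1 = 2 + (k - 1) by omega, pow_add]; norm_num]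
      exact dvd_mul_left _ _
    have h4 := (mul_dvd_mul_iff_left (by norm_num)).1 h3
    have h5 := Dvd.dvd.mul_left h4 ε
    rwa [← mul_assoc, hεε, one_mul] at h5
  have hpm : 82 * (9 * PP r t + 9) ^ 4 < 2 ^ (k / 4) := by
    have hW : (4 * ((t:ℤ) + 1)) ^ r ≤ 2 ^ (9 * w + 18) := by
      have h3 : (4 * ((t:ℤ) + 1)) ≤ 2 ^ (w + 2) := by
        have : 4 * (t + 1) ≤ 2 ^ (w + 2) := by rw [pow_add]; omega
        exact_mod_cast this
      calc (4 * ((t:ℤ) + 1)) ^ r ≤ (2 ^ (w + 2)) ^ r := pow_le_pow_left₀ (by positivity) h3 r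
        _ = 2 ^ ((w + 2) * r) := by rw [← pow_mul]
        _ ≤ _ := pow_le_pow_right₀ (by norm_num) (by nlinarith)
    have h1 : (1:ℤ) ≤ 2 ^ (9 * w + 18) := one_le_pow₀ (by norm_num)
    have h4 : 9 * PP r t + 9 ≤ 2 ^ (9 * w + 24) := by
      rw [show (2:ℤ) ^ (9 * w + 24) = 2 ^ (9 * w + 18) * 64 by ring]
      linarith
    calc 82 * (9 * PP r t + 9) ^ 4 ≤ 82 * (2 ^ (9 * w + 24)) ^ 4 := by gcongr
      _ < 128 * (2 ^ (9 * w + 24)) ^ 4 := by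
        have : (0:ℤ) < (2 ^ (9 * w + 24)) ^ 4 := by positivity
        linarith
      _ = 2 ^ (36 * w + 103) := by ring
      _ ≤ _ := pow_le_pow_right₀ (by norm_num) (by omega)
  have main := low_part (k / 4) d1 d2 a b L (PP r t) ε hε ha1 ha9 hb0 hb9 hp2 hd1k
    ((pow_dvd_pow _ (by omega)).trans hLp) hpm heq
  have e10 : (10:ℤ) ^ d1 = 2 ^ d1 * 5 ^ d1 := by rw [← mul_pow]; norm_num
  have hco : ∀ j, IsCoprime ((2:ℤ) ^ j) 9 := fun j => IsCoprime.pow_left (by norm_num)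
  rcases Nat.lt_or_ge t 4 with h4 | h4
  · -- few blocks
    have hdk : k ≤ d1 + 4 := by
      by_contra h0
      push Not at h0
      have h5 : (2:ℤ) ^ (d1 + 4) ∣ a * 10 ^ d1 := by
        rw [← main]; exact Dvd.dvd.mul_left ((pow_dvd_pow _ (by omega)).trans hLp) _
      rw [e10, pow_add, show a * ((2:ℤ) ^ d1 * 5 ^ d1) = 2 ^ d1 * (a * 5 ^ d1) by ring] at h5
      have h6 := (mul_dvd_mul_iff_left (by positivity)).1 h5
      have h7 : (2:ℤ) ^ 4 ∣ a := IsCoprime.dvd_of_dvd_mul_right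
        (IsCoprime.pow (by norm_num : IsCoprime (2:ℤ) 5)) h6
      have := Int.le_of_dvd (by omega) h7
      norm_num at this
      omega
    have : (k + 1) * t ≤ (k + 1) * 3 := Nat.mul_le_mul_left _ (by omega)
    omega
  · have h44 : (k + 1) * 4 ≤ (k + 1) * t := Nat.mul_le_mul_left _ h4
    refine d1_up k _ d1 w L hw hkw (by omega) hlow hs.2 ?_
    by_contra h0
    push Not at h0
    have hj : (2:ℤ) ^ (k + 1 + r + (3 * w + 3)) ∣ 4 * (ε * (L - ε * PP r t)) := by
      have h5 : (2:ℤ) ^ d1 ∣ 9 * (L - ε * PP r t) := by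
        rw [main, e10]; exact Dvd.dvd.mul_left (dvd_mul_right _ _) _
      have h6 := (hco d1).dvd_of_dvd_mul_left h5
      refine Dvd.dvd.mul_left (Dvd.dvd.mul_left ((pow_dvd_pow _ ?_).trans h6) _) _
      omega
    have hj2 : (2:ℤ) ^ (k + 1 + r + (3 * w + 3)) ∣ 4 * (ε * (L - ε * PP r t)) + 2 ^ (k + 1 + r) * eE k t r := by
      refine dvd_trans ?_ hF
      rw [← pow_add]
      exact pow_dvd_pow _ (by omega)
    have hj3 := (dvd_add_right hj).1 hj2
    rw [pow_add] at hj3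
    have hj4 := (mul_dvd_mul_iff_left (by positivity)).1 hj3
    have hj5 : 2 ^ (3 * w + 3) ∣ eE k t r := by exact_mod_cast hj4
    rw [eE, if_neg (by omega)] at hj5
    exact cc_val (k + 1 + r) (t - 1) w (by omega) (by omega) (by omega) hj5

set_option exponentiation.threshold 2000 in
theorem num_a : (1.8 * 10 ^ 291 : ℝ) ≤ 2 ^ 968 := by norm_num

set_option exponentiation.threshold 2000 in
theorem num_b : (2 ^ 967 : ℝ) ≤ 1.8 * 10 ^ 291 := by norm_num

/-- For `k > 470`, any solution of the almost repdigit equation satisfies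
`k < 3·10^{31}` and `n < 1.8·10^{291}`. -/
theorem k_and_n_absolute_bounds (k n : ℕ) (hk : 470 < k) (hnk : k + 1 ≤ n)
    (d1 d2 : ℕ) (a b : ℤ) (hd : d2 < d1) (hd1 : 3 ≤ d1)
    (ha1 : 1 ≤ a) (ha9 : a ≤ 9) (hb0 : 0 ≤ b) (hb9 : b ≤ 9)
    (heq : lucasL k n = a * ((10 ^ d1 - 1) / 9) + (b - a) * 10 ^ d2) :
    (k : ℝ) < 3 * 10 ^ 31 ∧ (n : ℝ) < 1.8 * 10 ^ 291 := by
  have h9 := nine_L d1 d2 a b _ heq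
  have hn : (n : ℝ) < 1.8 * 10 ^ 291 := by
    by_contra h0
    rw [not_lt] at h0
    have hn967 : 2 ^ 967 ≤ n := by
      have := num_b.trans h0
      exact_mod_cast this
    have hn0 : n ≠ 0 := by omega
    have hw : 968 ≤ Nat.log 2 n + 1 := by
      have := Nat.le_log_of_pow_le (by norm_num) hn967
      omega
    have hlt : n < 2 ^ (Nat.log 2 n + 1) := Nat.lt_pow_succ_log_self (by norm_num) n
    have hle : 2 ^ (Nat.log 2 n + 1 - 1) ≤ n := by
      rw [Nat.add_sub_cancel]; exact Nat.pow_log_le_self 2 hn0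
    rcases le_total (200 * (Nat.log 2 n + 1)) k with h | h
    · exact case_large k n _ hw h hlt hnk d1 d2 a b hd hd1 ha1 ha9 hb0 hb9 h9
    · exact case_small k n _ (by omega) hw h hlt hle d1 d2 a b hd hd1 ha1 ha9 hb0 hb9 h9
  refine ⟨?_, hn⟩
  by_contra h0
  rw [not_lt] at h0
  have hk2 : 200 * 968 ≤ k := by
    have : ((200 * 968 : ℕ) : ℝ) ≤ k := le_trans (by norm_num) h0
    exact_mod_cast this
  have hn2 : n < 2 ^ 968 := by
    have := hn.trans_le num_a
    exact_mod_cast this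
  exact case_large k n 968 le_rfl hk2 hn2 hnk d1 d2 a b hd hd1 ha1 ha9 hb0 hb9 h9
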